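/- Let K(t) = t^{α−1}/Γ(α) with α ∈ (1/2,1), σ > 0, β < 0, and let X be the fractional Volterra Ornstein–Uhlenbeck process. Define m₁(T) = (1/T)∫_{[0,T)} X_t τ(dt), m₂(T) = (1/T)∫_{[0,T)} X_t² τ(dt), and the method-of-moments estimators b̂_T = m₁(T) (C_α σ² / (m₂(T) − m₁(T)²))^{α/(2α−1)} and β̂_T = −(C_α σ² / (m₂(T) − m₁(T)²))^{α/(2α−1)}. Then (b̂_T, β̂_T) is consistent in probability locally uniformly: for every ε > 0 and every compact Θ ⊂ ℝ × (−∞,0), lim_{T→∞} sup_{(b,β)∈Θ} ℙ[|(b̂_T, β̂_T) − (b,β)| > ε] = 0. Furthermore, if (T_n)_{n≥1} satisfies T_n ↗ ∞ and Σ_{n=1}^∞ |1 − T_n/T_{n+1}|^p < ∞ for some p ∈ [1,∞), then (b̂_{T_n}, β̂_{T_n}) is strongly consistent. -/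

import Mathlib

open MeasureTheory Set Filter
open scoped ENNReal NNReal Topology

noncomputable section

/-- A scalar kernel is completely monotone: `C^∞` on `(0,∞)` with
`(-1)^n K^{(n)}(t) ≥ 0` for all `n` and `t > 0`. -/
def CompletelyMonotoneFn (K : ℝ → ℝ) : Prop :=
  ContDiffOn ℝ (⊤ : ℕ∞) K (Set.Ioi 0) ∧
  ∀ (n : ℕ) (t : ℝ), 0 < t → 0 ≤ (-1 : ℝ) ^ n * iteratedDerivWithin n K (Set.Ioi 0) t

/-- Assumption (VOU) on the kernel: `0 ≤ K ∈ L²_loc(ℝ₊)` completely monotone, and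
there is `γ ∈ (0,1]` with
`sup_{0 ≤ t-s ≤ 1} (t-s)^{-2γ}(∫_s^t K(r)² dr + ∫₀^∞ (K((t-s)+r)-K(r))² dr) < ∞`. -/
def AssumptionVOUKernel (K : ℝ → ℝ) (γ : ℝ) : Prop :=
  (∀ t > (0:ℝ), 0 ≤ K t) ∧ CompletelyMonotoneFn K ∧
  (∀ T > (0:ℝ), IntervalIntegrable (fun t => (K t) ^ 2) volume 0 T) ∧
  γ ∈ Set.Ioc (0:ℝ) 1 ∧
  ∃ Cγ : ℝ, ∀ s t : ℝ, 0 ≤ s → s ≤ t → t - s ≤ 1 →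
    IntegrableOn (fun r => (K ((t - s) + r) - K r) ^ 2) (Set.Ioi 0) ∧
    (∫ r in s..t, (K r) ^ 2) + (∫ r in Set.Ioi (0:ℝ), (K ((t - s) + r) - K r) ^ 2) ≤
      Cγ * (t - s) ^ (2 * γ)

/-- `E_β ∈ L²_loc(ℝ₊)` solves the linear Volterra equation
`E_β(t) = K(t) + ∫₀ᵗ K(t-s) β E_β(s) ds`. -/
def SolvesResolventEq (K : ℝ → ℝ) (β : ℝ) (E : ℝ → ℝ) : Prop :=
  (∀ T > (0:ℝ), IntervalIntegrable (fun t => (E t) ^ 2) volume 0 T) ∧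
  ∀ t > (0:ℝ), E t = K t + ∫ s in (0:ℝ)..t, K (t - s) * (β * E s)

/-- `‖K‖_{L¹(ℝ₊)} = ∫₀^∞ K(t) dt ∈ [0,∞]`. -/
noncomputable def normL1 (K : ℝ → ℝ) : ℝ≥0∞ :=
  ∫⁻ t in Set.Ioi (0:ℝ), ENNReal.ofReal (K t)

/-- The mean `𝔼[X_t] = (1 + β∫₀ᵗ E_β)x₀ + (∫₀ᵗ E_β) b` of the VOU process. -/
noncomputable def meanVOU (E : ℝ → ℝ → ℝ) (x₀ b β t : ℝ) : ℝ :=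
  (1 + β * ∫ s in (0:ℝ)..t, E β s) * x₀ + (∫ s in (0:ℝ)..t, E β s) * b

/-- The limit mean `m₁(b,β) = x₀/(1 + ‖K‖_{L¹}|β|) + b/|β|` (with `1/∞ = 0`). -/
noncomputable def m1VOU (K : ℝ → ℝ) (x₀ b β : ℝ) : ℝ :=
  x₀ * ((1 + normL1 K * ENNReal.ofReal |β|)⁻¹).toReal + b / |β|

/-- Covariance of the VOU process: `cov(X_t, X_s) = σ²∫₀^{s∧t} E_β(|t-s|+r)E_β(r) dr`. -/
noncomputable def covVOU (E : ℝ → ℝ → ℝ) (σ β s t : ℝ) : ℝ :=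
  σ ^ 2 * ∫ r in (0:ℝ)..(min s t), E β (|t - s| + r) * E β r

/-- Covariance of the stationary VOU process:
`cov(X^stat_t, X^stat_s) = σ²∫₀^∞ E_β(|t-s|+r)E_β(r) dr`. -/
noncomputable def covStatVOU (E : ℝ → ℝ → ℝ) (σ β s t : ℝ) : ℝ :=
  σ ^ 2 * ∫ r in Set.Ioi (0:ℝ), E β (|t - s| + r) * E β r

/-- `X` is a Gaussian process (over times in `S`) with mean function `m` and
covariance function `c`: every finite linear combination is Gaussian. -/
def IsGaussianProcessOn {Ω : Type*} [MeasurableSpace Ω] (P : Measure Ω) (S : Set ℝ)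
    (X : ℝ → Ω → ℝ) (m : ℝ → ℝ) (c : ℝ → ℝ → ℝ) : Prop :=
  (∀ t, Measurable (X t)) ∧
  ∀ (n : ℕ) (t : Fin n → ℝ) (a : Fin n → ℝ), (∀ i, t i ∈ S) →
    Measure.map (fun ω => ∑ i, a i * X (t i) ω) P =
      ProbabilityTheory.gaussianReal (∑ i, a i * m (t i))
        (Real.toNNReal (∑ i, ∑ j, a i * a j * c (t i) (t j)))

/-- The limiting variance `m_var(β) = σ²∫₀^∞ E_β(r)² dr`. -/
noncomputable def mvarVOU (E : ℝ → ℝ → ℝ) (σ β : ℝ) : ℝ :=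
  σ ^ 2 * ∫ r in Set.Ioi (0:ℝ), (E β r) ^ 2

/-- The limiting Gaussian distribution `π_{b,β} = 𝒩(m₁(b,β), m_var(β))`. -/
noncomputable def piVOU (K : ℝ → ℝ) (E : ℝ → ℝ → ℝ) (x₀ σ b β : ℝ) : Measure ℝ :=
  ProbabilityTheory.gaussianReal (m1VOU K x₀ b β) (Real.toNNReal (mvarVOU E σ β))

/-- The fractional Riemann–Liouville kernel `K_α(t) = t^{α-1}/Γ(α)`. -/
noncomputable def fractionalKernel (α t : ℝ) : ℝ := t ^ (α - 1) / Real.Gamma α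

/-- `C_α = (1/π)∫₀^∞ du/(1 + 2u^α cos(πα/2) + u^{2α})`. -/
noncomputable def Calpha (α : ℝ) : ℝ :=
  (1 / Real.pi) * ∫ u in Set.Ioi (0:ℝ),
    1 / (1 + 2 * u ^ α * Real.cos (Real.pi * α / 2) + u ^ (2 * α))

section
open MeasureTheory Set Filter
open scoped ENNReal NNReal Topology


lemma fk_pos {α t : ℝ} (hα : 0 < α) (ht : 0 < t) : 0 < fractionalKernel α t :=
  div_pos (Real.rpow_pos_of_pos ht _) (Real.Gamma_pos_of_pos hα)

lemma fk_meas (α : ℝ) : Measurable (fractionalKernel α) := by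
  unfold fractionalKernel; fun_prop

lemma fk_contOn (α : ℝ) : ContinuousOn (fractionalKernel α) (Ioi 0) := by
  unfold fractionalKernel
  apply ContinuousOn.div_const
  intro x hx
  exact (Real.continuousAt_rpow_const x _ (Or.inl (ne_of_gt hx))).continuousWithinAt

lemma fk_anti {α s t : ℝ} (hα : 0 < α) (hα1 : α < 1) (hs : 0 < s) (hst : s ≤ t) :
    fractionalKernel α t ≤ fractionalKernel α s := by
  unfold fractionalKernel
  apply div_le_div_of_nonneg_right _ (Real.Gamma_pos_of_pos hα).le
  exact Real.rpow_le_rpow_of_nonpos hs hst (by linarith)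

lemma fk_ii {α : ℝ} (hα : 0 < α) (a b : ℝ) :
    IntervalIntegrable (fractionalKernel α) volume a b :=
  (intervalIntegral.intervalIntegrable_rpow' (by linarith)).div_const _

lemma fk_sq_ii {α : ℝ} (hα : 1/2 < α) {a b : ℝ} (ha : 0 ≤ a) (hb : 0 ≤ b) :
    IntervalIntegrable (fun t => fractionalKernel α t ^ 2) volume a b := by
  have h : IntervalIntegrable (fun t : ℝ => t ^ (2 * (α - 1)) / Real.Gamma α ^ 2) volume a b :=
    (intervalIntegral.intervalIntegrable_rpow' (by linarith)).div_const _
  refine h.congr ?_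
  intro t ht
  have ht0 : 0 < t := lt_of_le_of_lt (le_min ha hb) ht.1
  simp only [fractionalKernel, div_pow]
  rw [← Real.rpow_natCast (t ^ (α - 1)) 2, ← Real.rpow_mul ht0.le]
  norm_num [mul_comm]

/-- Young's inequality -/
lemma young (a b η : ℝ) (hη : 0 < η) : |a * b| ≤ a ^ 2 / (2 * η) + η / 2 * b ^ 2 := by
  rw [abs_mul, ← sq_abs a, ← sq_abs b, ← sub_nonneg]
  have : |a| ^ 2 / (2 * η) + η / 2 * |b| ^ 2 - |a| * |b| = (|a| - η * |b|) ^ 2 / (2 * η) := by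
    field_simp; ring
  rw [this]; positivity

lemma aesm_of_mul_kernel {α T : ℝ} (hα : 0 < α) {E : ℝ → ℝ} {β : ℝ} (hβ : β ≠ 0)
    (h : AEStronglyMeasurable (fun s => fractionalKernel α (T - s) * (β * E s))
      (volume.restrict (Ioc 0 T))) :
    AEStronglyMeasurable E (volume.restrict (Ioc 0 T)) := by
  have hm : AEStronglyMeasurable (fun s => (fractionalKernel α (T - s) * β)⁻¹)
      (volume.restrict (Ioc 0 T)) := by
    have := fk_meas α
    exact (by fun_prop : Measurable (fun s => (fractionalKernel α (T - s) * β)⁻¹)).aestronglyMeasurable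
  refine (hm.mul h).congr ?_
  rw [← restrict_Ioo_eq_restrict_Ioc]
  refine (ae_restrict_iff' measurableSet_Ioo).2 (ae_of_all _ fun s hs => ?_)
  have hk : fractionalKernel α (T - s) ≠ 0 := (fk_pos hα (sub_pos.2 hs.2)).ne'
  simp only [Pi.mul_apply]
  field_simp

lemma solves_aesm {α : ℝ} (hα : 0 < α) {E : ℝ → ℝ} {β : ℝ} (hβ : β ≠ 0)
    (h : SolvesResolventEq (fractionalKernel α) β E) :
    AEStronglyMeasurable E (volume.restrict (Ioi 0)) := by
  set S : Set ℝ := {T | 0 < T ∧ AEStronglyMeasurable E (volume.restrict (Ioc 0 T))} with hS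
  have hdown : ∀ T ∈ S, ∀ T', 0 < T' → T' ≤ T → T' ∈ S := fun T hT T' h0 hle =>
    ⟨h0, hT.2.mono_set (Ioc_subset_Ioc_right hle)⟩
  have hout : ∀ T, 0 < T → T ∉ S → E T = fractionalKernel α T := by
    intro T hT hTS
    rw [h.2 T hT, intervalIntegral.integral_undef, add_zero]
    intro hi
    rw [intervalIntegrable_iff_integrableOn_Ioc_of_le hT.le] at hi
    exact hTS ⟨hT, aesm_of_mul_kernel hα hβ hi.aestronglyMeasurable⟩
  have key : ∀ u : ℕ → ℝ, (∀ n, u n ∈ S) → AEStronglyMeasurable E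
      (volume.restrict (⋃ n, Ioc 0 (u n))) := fun u hu =>
    (aestronglyMeasurable_iUnion_iff).2 fun n => (hu n).2
  by_cases hall : ∀ T, 0 < T → T ∈ S
  · refine (key (fun n => (n:ℝ) + 1) (fun n => hall _ (by positivity))).mono_set ?_
    intro x hx
    obtain ⟨n, hn⟩ := exists_nat_ge x
    exact mem_iUnion.2 ⟨n, hx, by linarith⟩
  push Not at hall
  obtain ⟨T₁, hT₁, hT₁S⟩ := hall
  have hK : ∀ s, (∀ t ∈ s, 0 < t ∧ t ∉ S) → MeasurableSet s →
      AEStronglyMeasurable E (volume.restrict s) := by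
    intro s hs hsm
    refine ((fk_meas α).aestronglyMeasurable).congr ?_
    exact (ae_restrict_iff' hsm).2 (ae_of_all _ fun t ht => (hout t (hs t ht).1 (hs t ht).2).symm)
  by_cases hne : S.Nonempty
  swap
  · exact hK _ (fun t ht => ⟨ht, fun h => hne ⟨t, h⟩⟩) measurableSet_Ioi
  have hbdd : BddAbove S := ⟨T₁, fun T hT => le_of_not_gt fun hlt => hT₁S (hdown T hT T₁ hT₁ hlt.le)⟩
  set t := sSup S with ht
  obtain ⟨T₂, hT₂⟩ := hne
  have ht0 : 0 < t := lt_of_lt_of_le hT₂.1 (le_csSup hbdd hT₂)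
  have hlt : ∀ s, 0 < s → s < t → s ∈ S := by
    intro s hs hst
    obtain ⟨r, hr, hsr⟩ := exists_lt_of_lt_csSup ⟨T₂, hT₂⟩ hst
    exact hdown r hr s hs hsr.le
  have hgt : ∀ s, t < s → s ∉ S := fun s hs hsS => absurd (le_csSup hbdd hsS) (not_le.2 hs)
  have h1 : AEStronglyMeasurable E (volume.restrict (Ioo 0 t)) := by
    obtain ⟨u, _, hu, hut⟩ := exists_seq_strictMono_tendsto' ht0
    refine (key u (fun n => hlt _ (hu n).1 (hu n).2)).mono_set ?_
    intro x hx
    obtain ⟨n, hn⟩ := (hut.eventually (lt_mem_nhds hx.2)).exists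
    exact mem_iUnion.2 ⟨n, hx.1, hn.le⟩
  have h2 := hK (Ioi t) (fun s hs => ⟨ht0.trans hs, hgt s hs⟩) measurableSet_Ioi
  rw [restrict_Ioo_eq_restrict_Ioc] at h1
  have := (aestronglyMeasurable_union_iff).2 ⟨h1, h2⟩
  rwa [Ioc_union_Ioi_eq_Ioi ht0.le] at this

/-- Locally square integrable functions on the positive half line. -/
def L2loc (E : ℝ → ℝ) : Prop :=
  AEStronglyMeasurable E (volume.restrict (Ioi 0)) ∧
    ∀ T > (0:ℝ), IntervalIntegrable (fun t => (E t) ^ 2) volume 0 T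

lemma solves_L2loc {α : ℝ} (hα : 0 < α) {E : ℝ → ℝ} {β : ℝ} (hβ : β ≠ 0)
    (h : SolvesResolventEq (fractionalKernel α) β E) : L2loc E :=
  ⟨solves_aesm hα hβ h, h.1⟩

lemma L2loc.ii_sq {E : ℝ → ℝ} (h : L2loc E) {a b : ℝ} (ha : 0 ≤ a) (hb : 0 ≤ b) :
    IntervalIntegrable (fun t => (E t) ^ 2) volume a b := by
  have := h.2 (max a b + 1) (by have := le_max_left a b; linarith)
  refine this.mono_set ?_
  rw [uIcc_of_le (by have := le_max_left a b; linarith : (0:ℝ) ≤ max a b + 1)]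
  intro x hx
  refine ⟨(le_min ha hb).trans hx.1, hx.2.trans (by linarith)⟩

lemma L2loc.aesm {E : ℝ → ℝ} (h : L2loc E) {a b : ℝ} (ha : 0 ≤ a) :
    AEStronglyMeasurable E (volume.restrict (Ioc a b)) :=
  h.1.mono_set fun _ hx => lt_of_le_of_lt ha hx.1

lemma kshift_sq_ii {α : ℝ} (hα : 1/2 < α) {t a b : ℝ} (ha : a ≤ t) (hb : b ≤ t) :
    IntervalIntegrable (fun s => fractionalKernel α (t - s) ^ 2) volume a b := by
  have := (fk_sq_ii hα (a := t - a) (b := t - b) (by linarith) (by linarith)).comp_sub_left t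
  simpa using this

lemma conv_ii {α : ℝ} (hα : 1/2 < α) {E : ℝ → ℝ} (h : L2loc E) {t a b : ℝ}
    (ha : 0 ≤ a) (hab : a ≤ b) (hb : b ≤ t) :
    IntervalIntegrable (fun s => fractionalKernel α (t - s) * E s) volume a b := by
  have hm : AEStronglyMeasurable (fun s => fractionalKernel α (t - s) * E s)
      (volume.restrict (uIoc a b)) := by
    rw [uIoc_of_le hab]
    exact ((fk_meas α).comp (by fun_prop : Measurable fun s => t - s)).aestronglyMeasurable.mul
      (h.aesm ha)
  refine IntervalIntegrable.mono_fun'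
    (((kshift_sq_ii hα (hab.trans hb) hb).div_const (2 * 1)).add
      ((h.ii_sq ha (ha.trans hab)).const_mul (1/2))) hm ?_
  exact ae_of_all _ fun s => young _ _ 1 one_pos

lemma conv_bound {α : ℝ} (hα : 1/2 < α) {E : ℝ → ℝ} (h : L2loc E) {t a b η : ℝ}
    (ha : 0 ≤ a) (hab : a ≤ b) (hb : b ≤ t) (hη : 0 < η) :
    |∫ s in a..b, fractionalKernel α (t - s) * E s| ≤
      (∫ s in (t-b)..(t-a), fractionalKernel α s ^ 2) / (2 * η)
        + η / 2 * ∫ s in a..b, E s ^ 2 := by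
  have h1 := (kshift_sq_ii hα (hab.trans hb) hb).div_const (2 * η)
  have h2 := ((h.ii_sq ha (ha.trans hab)).const_mul (η/2))
  have := intervalIntegral.norm_integral_le_of_norm_le hab
    (f := fun s => fractionalKernel α (t - s) * E s)
    (ae_of_all _ fun s _ => young (fractionalKernel α (t - s)) (E s) η hη) (h1.add h2)
  rw [intervalIntegral.integral_add h1 h2, intervalIntegral.integral_div,
    intervalIntegral.integral_const_mul,
    intervalIntegral.integral_comp_sub_left (fun s => fractionalKernel α s ^ 2) t] at this
  exact this

lemma conv_holder {α : ℝ} (hα : 1/2 < α) (hα1 : α < 1) {E : ℝ → ℝ} (h : L2loc E) {t t' T η : ℝ}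
    (ht : 0 < t) (htt : t ≤ t') (hT : t' ≤ T) (hη : 0 < η) :
    |(∫ s in (0:ℝ)..t', fractionalKernel α (t' - s) * E s)
      - ∫ s in (0:ℝ)..t, fractionalKernel α (t - s) * E s| ≤
      (∫ s in (0:ℝ)..(t'-t), fractionalKernel α s ^ 2) / η
        + η / 2 * ∫ s in (0:ℝ)..T, E s ^ 2 := by
  have i1 := conv_ii hα h (t := t') le_rfl ht.le htt
  have i2 := conv_ii hα h (t := t') ht.le htt le_rfl
  have i3 := conv_ii hα h (t := t) le_rfl ht.le le_rfl
  rw [← intervalIntegral.integral_add_adjacent_intervals i1 i2, add_sub_right_comm,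
    ← intervalIntegral.integral_sub i1 i3]
  have b2 := conv_bound hα h (t := t') ht.le htt le_rfl hη
  rw [sub_self] at b2
  have k1 := kshift_sq_ii hα (t := t) ht.le (le_refl t)
  have k2 := kshift_sq_ii hα (t := t') (ht.le.trans htt) htt
  have b1 : |∫ s in (0:ℝ)..t, (fractionalKernel α (t' - s) * E s - fractionalKernel α (t - s) * E s)|
      ≤ (∫ s in (0:ℝ)..(t'-t), fractionalKernel α s ^ 2) / (2 * η)
        + η / 2 * ∫ s in (0:ℝ)..t, E s ^ 2 := by
    have h1 := ((k1.sub k2).div_const (2 * η))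
    have h2 := ((h.ii_sq le_rfl ht.le).const_mul (η/2))
    have key := intervalIntegral.norm_integral_le_of_norm_le ht.le
      (f := fun s => fractionalKernel α (t' - s) * E s - fractionalKernel α (t - s) * E s)
      (g := fun s => (fractionalKernel α (t - s) ^ 2 - fractionalKernel α (t' - s) ^ 2) / (2 * η)
        + η / 2 * E s ^ 2) (by
        have hne : ∀ᵐ s : ℝ, s ≠ t := by simp [ae_iff]
        filter_upwards [hne] with s hst hs
        have hs' : 0 < t - s := sub_pos.2 (lt_of_le_of_ne hs.2 hst)
        rw [← sub_mul]
        refine (young _ _ η hη).trans ?_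
        gcongr
        have p2 := fk_pos (by linarith : 0 < α) (by linarith : 0 < t' - s)
        have p3 := fk_anti (by linarith : 0 < α) hα1 hs' (by linarith : t - s ≤ t' - s)
        nlinarith) (h1.add h2)
    rw [intervalIntegral.integral_add h1 h2, intervalIntegral.integral_div,
      intervalIntegral.integral_const_mul, intervalIntegral.integral_sub k1 k2,
      intervalIntegral.integral_comp_sub_left (fun s => fractionalKernel α s ^ 2) t,
      intervalIntegral.integral_comp_sub_left (fun s => fractionalKernel α s ^ 2) t'] at key
    refine key.trans ?_
    gcongr
    simp only [sub_self, sub_zero]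
    have e1 := intervalIntegral.integral_add_adjacent_intervals
      (fk_sq_ii hα le_rfl ht.le) (fk_sq_ii hα ht.le (ht.le.trans htt))
    have e2 := intervalIntegral.integral_add_adjacent_intervals
      (fk_sq_ii hα le_rfl (sub_nonneg.2 htt))
      (fk_sq_ii hα (sub_nonneg.2 htt) (ht.le.trans htt))
    have e3 : 0 ≤ ∫ x in t..t', fractionalKernel α x ^ 2 :=
      intervalIntegral.integral_nonneg htt fun _ _ => sq_nonneg _
    linarith
  have e1 := intervalIntegral.integral_add_adjacent_intervals
      (h.ii_sq le_rfl ht.le) (h.ii_sq ht.le (ht.le.trans htt))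
  have e2 := intervalIntegral.integral_add_adjacent_intervals
      (h.ii_sq le_rfl (ht.le.trans htt)) (h.ii_sq (ht.le.trans htt) ((ht.le.trans htt).trans hT))
  have e3 : 0 ≤ ∫ x in t'..T, E x ^ 2 :=
      intervalIntegral.integral_nonneg hT fun _ _ => sq_nonneg _
  refine (abs_add_le _ _).trans ((add_le_add b1 b2).trans ?_)
  rw [← e2, ← e1]
  have e4 : (∫ s in (0:ℝ)..(t'-t), fractionalKernel α s ^ 2) / η =
    (∫ s in (0:ℝ)..(t'-t), fractionalKernel α s ^ 2) / (2 * η) +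
    (∫ s in (0:ℝ)..(t'-t), fractionalKernel α s ^ 2) / (2 * η) := by field_simp; ring
  rw [e4]
  have := mul_nonneg (half_pos hη).le e3
  linarith

lemma conv_cont {α : ℝ} (hα : 1/2 < α) (hα1 : α < 1) {E : ℝ → ℝ} (h : L2loc E) :
    ContinuousOn (fun t => ∫ s in (0:ℝ)..t, fractionalKernel α (t - s) * E s) (Ioi 0) := by
  rw [isOpen_Ioi.continuousOn_iff]
  intro t ht
  rw [mem_Ioi] at ht
  rw [Metric.continuousAt_iff']
  intro ε hε
  set A := ∫ s in (0:ℝ)..(t+1), E s ^ 2 with hA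
  have hA0 : 0 ≤ A := intervalIntegral.integral_nonneg (by linarith) fun _ _ => sq_nonneg _
  set η := ε / (A + 1) with hη
  have hη0 : 0 < η := by positivity
  have hc : Tendsto (fun t' => (∫ s in (0:ℝ)..|t' - t|, fractionalKernel α s ^ 2) / η)
      (𝓝 t) (𝓝 0) := by
    have h1 : Tendsto (fun u => ∫ s in (0:ℝ)..u, fractionalKernel α s ^ 2) (𝓝[Icc 0 1] 0)
        (𝓝 (∫ s in (0:ℝ)..0, fractionalKernel α s ^ 2)) := by
      have := intervalIntegral.continuousOn_primitive_interval
        (f := fun s => fractionalKernel α s ^ 2) (μ := volume) (a := 0) (b := 1) (by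
          have := fk_sq_ii hα (le_refl (0:ℝ)) zero_le_one
          rwa [intervalIntegrable_iff'] at this)
      rw [uIcc_of_le zero_le_one] at this
      exact this 0 (by simp)
    have h2 : Tendsto (fun t' => |t' - t|) (𝓝 t) (𝓝[Icc 0 1] 0) := by
      apply tendsto_nhdsWithin_of_tendsto_nhds_of_eventually_within
      · have : Continuous fun t' => |t' - t| := by fun_prop
        simpa using this.tendsto t
      · filter_upwards [Metric.ball_mem_nhds t one_pos] with x hx
        exact ⟨abs_nonneg _, (by simpa [Real.dist_eq] using hx : |x - t| < 1).le⟩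
    have := (h1.comp h2).div_const η
    simpa using this
  have hball := Metric.ball_mem_nhds t (lt_min ht one_pos)
  filter_upwards [hc.eventually (gt_mem_nhds (half_pos hε)), hball] with t' h1 h2
  rw [Metric.mem_ball, Real.dist_eq, abs_lt] at h2
  have m1 := min_le_left t 1
  have m2 := min_le_right t 1
  have hfin : η / 2 * A < ε / 2 := by
    rw [hη]
    have : ε / (A+1) * A < ε := by
      rw [div_mul_eq_mul_div, div_lt_iff₀ (by linarith)]; nlinarith
    linarith
  rw [Real.dist_eq]
  rcases le_total t t' with hle | hle
  · rw [abs_of_nonneg (sub_nonneg.2 hle)] at h1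
    have := conv_holder hα hα1 h ht hle (by linarith : t' ≤ t + 1) hη0
    linarith
  · rw [abs_sub_comm, abs_of_nonneg (sub_nonneg.2 hle)] at h1
    rw [abs_sub_comm]
    have := conv_holder hα hα1 h (by linarith : 0 < t') hle (by linarith : t ≤ t + 1) hη0
    linarith

lemma conv_bdd {α : ℝ} (hα : 1/2 < α) {E : ℝ → ℝ} (h : L2loc E) (T : ℝ) :
    ∃ C, 0 ≤ C ∧ ∀ t, 0 < t → t ≤ T →
      |∫ s in (0:ℝ)..t, fractionalKernel α (t - s) * E s| ≤ C := by
  rcases le_or_gt T 0 with hT | hT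
  · exact ⟨0, le_rfl, fun t h1 h2 => by linarith⟩
  have n1 : 0 ≤ ∫ s in (0:ℝ)..T, fractionalKernel α s ^ 2 :=
    intervalIntegral.integral_nonneg hT.le fun _ _ => sq_nonneg _
  have n2 : 0 ≤ ∫ s in (0:ℝ)..T, E s ^ 2 :=
    intervalIntegral.integral_nonneg hT.le fun _ _ => sq_nonneg _
  refine ⟨(∫ s in (0:ℝ)..T, fractionalKernel α s ^ 2) / (2 * 1)
        + 1 / 2 * ∫ s in (0:ℝ)..T, E s ^ 2, by positivity, fun t ht htT => ?_⟩
  refine (conv_bound hα h le_rfl ht.le le_rfl one_pos).trans ?_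
  have e1 := intervalIntegral.integral_add_adjacent_intervals
      (fk_sq_ii hα le_rfl ht.le) (fk_sq_ii hα ht.le hT.le)
  have e2 := intervalIntegral.integral_add_adjacent_intervals
      (h.ii_sq le_rfl ht.le) (h.ii_sq ht.le hT.le)
  have e3 : 0 ≤ ∫ x in t..T, E x ^ 2 :=
      intervalIntegral.integral_nonneg htT fun _ _ => sq_nonneg _
  have e4 : 0 ≤ ∫ x in t..T, fractionalKernel α x ^ 2 :=
      intervalIntegral.integral_nonneg htT fun _ _ => sq_nonneg _
  simp only [sub_self, sub_zero]
  gcongr <;> linarith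

lemma laplace_fk {α r : ℝ} (hα : 0 < α) (hr : 0 < r) :
    ∫ t in Ioi (0:ℝ), fractionalKernel α t * Real.exp (-(r * t)) = (1 / r) ^ α := by
  have h := Real.integral_rpow_mul_exp_neg_mul_Ioi hα hr
  have hg := (Real.Gamma_pos_of_pos hα).ne'
  have : ∀ t : ℝ, fractionalKernel α t * Real.exp (-(r * t)) =
    (t ^ (α - 1) * Real.exp (-(r * t))) / Real.Gamma α := fun t => by
      simp only [fractionalKernel]; ring
  simp_rw [this]
  rw [integral_div, h]; field_simp

lemma laplace_fk_int {α r : ℝ} (hα : 0 < α) (hr : 0 < r) :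
    IntegrableOn (fun t => fractionalKernel α t * Real.exp (-(r * t))) (Ioi 0) := by
  by_contra hn
  have := laplace_fk hα hr
  rw [integral_undef hn] at this
  have h2 : 0 < (1 / r) ^ α := by positivity
  linarith

lemma volterra_unique {α : ℝ} (hα : 1/2 < α) {D : ℝ → ℝ} {β : ℝ} (h : L2loc D)
    (hD : ∀ t, 0 < t → D t = β * ∫ s in (0:ℝ)..t, fractionalKernel α (t - s) * D s)
    {t₀ : ℝ} (ht₀ : 0 < t₀) : D t₀ = 0 := by
  have hα0 : 0 < α := by linarith
  obtain ⟨C, hC0, hC⟩ := conv_bdd hα h t₀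
  have hlim : Tendsto (fun r : ℝ => |β| * (1 / r) ^ α) atTop (𝓝 0) := by
    have : Tendsto (fun r : ℝ => |β| * r ^ (-α)) atTop (𝓝 (|β| * 0)) :=
      (tendsto_rpow_neg_atTop hα0).const_mul _
    rw [mul_zero] at this
    refine this.congr' ?_
    filter_upwards [eventually_gt_atTop 0] with r hr
    rw [one_div, Real.inv_rpow hr.le, Real.rpow_neg hr.le]
  obtain ⟨r, hr1, hr0⟩ := ((hlim.eventually (gt_mem_nhds (by norm_num : (0:ℝ) < 1/2))).and
    (eventually_gt_atTop 0)).exists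
  have claim : ∀ n : ℕ, ∀ t, 0 < t → t ≤ t₀ →
      |D t| ≤ |β| * C * (1/2)^n * Real.exp (r * t) := by
    intro n
    induction n with
    | zero =>
      intro t ht htt
      rw [hD t ht, abs_mul, pow_zero, mul_one]
      have h1 : 1 ≤ Real.exp (r * t) := Real.one_le_exp (by positivity)
      have := hC t ht htt
      calc _ ≤ |β| * C := by gcongr
        _ ≤ _ := le_mul_of_one_le_right (by positivity) h1
    | succ n ih =>
      intro t ht htt
      rw [hD t ht, abs_mul]
      set M := |β| * C * (1/2)^n with hM
      have hM0 : 0 ≤ M := by positivity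
      have hi : IntervalIntegrable (fun u => fractionalKernel α u * Real.exp (-(r * u))) volume 0 t := by
        rw [intervalIntegrable_iff_integrableOn_Ioc_of_le ht.le]
        exact (laplace_fk_int hα0 hr0).mono_set fun x hx => hx.1
      have hi2 : IntervalIntegrable (fun s => M * Real.exp (r * t) *
          (fractionalKernel α (t - s) * Real.exp (-(r * (t - s))))) volume 0 t := by
        have := (hi.comp_sub_left t).symm
        simp only [sub_zero, sub_self] at this
        exact this.const_mul _
      have key := intervalIntegral.norm_integral_le_of_norm_le ht.le
        (f := fun s => fractionalKernel α (t - s) * D s)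
        (g := fun s => M * Real.exp (r * t) *
          (fractionalKernel α (t - s) * Real.exp (-(r * (t - s))))) (by
          have hne : ∀ᵐ s : ℝ, s ≠ t := by simp [ae_iff]
          filter_upwards [hne] with s hst hs
          have hs' : 0 < t - s := sub_pos.2 (lt_of_le_of_ne hs.2 hst)
          have hk := fk_pos hα0 hs'
          rw [norm_mul, Real.norm_eq_abs, Real.norm_eq_abs, abs_of_pos hk]
          have e : Real.exp (r * t) * Real.exp (-(r * (t - s))) = Real.exp (r * s) := by
            rw [← Real.exp_add]; congr 1; ring
          calc _ ≤ fractionalKernel α (t - s) * (M * Real.exp (r * s)) := by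
                gcongr; exact ih s hs.1 (hs.2.trans htt)
            _ = _ := by rw [← e]; ring) hi2
      rw [intervalIntegral.integral_const_mul,
        intervalIntegral.integral_comp_sub_left
          (fun u => fractionalKernel α u * Real.exp (-(r * u))) t, sub_self, sub_zero] at key
      have hle : ∫ u in (0:ℝ)..t, fractionalKernel α u * Real.exp (-(r * u)) ≤ (1/r)^α := by
        rw [intervalIntegral.integral_of_le ht.le, ← laplace_fk hα0 hr0]
        apply setIntegral_mono_set (laplace_fk_int hα0 hr0)
        · exact (ae_restrict_iff' measurableSet_Ioi).2 (ae_of_all _ fun x hx =>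
            mul_nonneg (fk_pos hα0 hx).le (Real.exp_pos _).le)
        · exact ae_of_all _ fun x hx => hx.1
      rw [Real.norm_eq_abs] at key
      calc _ ≤ |β| * (M * Real.exp (r * t) * (1/r)^α) := by
            gcongr; exact key.trans (by gcongr)
        _ = (|β| * (1/r)^α) * (M * Real.exp (r * t)) := by ring
        _ ≤ (1/2) * (M * Real.exp (r * t)) := by gcongr
        _ = _ := by rw [hM, pow_succ]; ring
  have hl : Tendsto (fun n : ℕ => |β| * C * (1/2)^n * Real.exp (r * t₀)) atTop (𝓝 0) := by
    have := ((tendsto_pow_atTop_nhds_zero_of_lt_one (by norm_num : (0:ℝ) ≤ 1/2)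
      (by norm_num)).const_mul (|β| * C)).mul_const (Real.exp (r * t₀))
    simpa using this
  have := ge_of_tendsto' hl (fun n => claim n t₀ ht₀ le_rfl)
  exact abs_eq_zero.1 (le_antisymm this (abs_nonneg _))

end

section
open MeasureTheory Set Filter
open scoped ENNReal NNReal Topology


lemma solves_eq {α β : ℝ} {E : ℝ → ℝ} (h : SolvesResolventEq (fractionalKernel α) β E) {t : ℝ}
    (ht : 0 < t) :
    E t = fractionalKernel α t + β * ∫ s in (0:ℝ)..t, fractionalKernel α (t - s) * E s := by
  rw [h.2 t ht, ← intervalIntegral.integral_const_mul]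
  congr 2; ext s; ring

lemma fk_scale {α μ x : ℝ} (hμ : 0 < μ) (hx : 0 ≤ x) :
    fractionalKernel α (x / μ) = μ ^ (1 - α) * fractionalKernel α x := by
  unfold fractionalKernel
  rw [Real.div_rpow hx hμ.le, show (1 - α) = -(α - 1) by ring, Real.rpow_neg hμ.le]
  ring

lemma solves_scale {α : ℝ} (hα : 1/2 < α) {E₁ E : ℝ → ℝ} {β : ℝ} (hβ : β < 0)
    (h₁ : SolvesResolventEq (fractionalKernel α) (-1) E₁)
    (h : SolvesResolventEq (fractionalKernel α) β E) {t : ℝ} (ht : 0 < t) :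
    E t = |β| ^ (1 / α - 1) * E₁ (|β| ^ (1 / α) * t) := by
  have hα0 : 0 < α := by linarith
  have hb : 0 < |β| := abs_pos.2 hβ.ne
  set μ := |β| ^ (1 / α) with hμd
  have hμ : 0 < μ := Real.rpow_pos_of_pos hb _
  have hc : |β| ^ (1 / α - 1) = μ ^ (1 - α) := by
    rw [hμd, ← Real.rpow_mul hb.le]; congr 1; field_simp
  have hμα : μ ^ α = |β| := by
    rw [hμd, ← Real.rpow_mul hb.le, one_div, inv_mul_cancel₀ hα0.ne', Real.rpow_one]
  rw [hc]
  set c := μ ^ (1 - α) with hcd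
  have L1 := solves_L2loc hα0 (by norm_num) h₁
  have L := solves_L2loc hα0 hβ.ne h
  have Lt : L2loc (fun t => c * E₁ (μ * t)) := by
    constructor
    · refine AEStronglyMeasurable.const_mul ?_ _
      have hqm : Measure.QuasiMeasurePreserving (fun t => μ * t) (volume.restrict (Ioi (0:ℝ)))
          (volume.restrict (Ioi (0:ℝ))) := by
        refine ⟨by fun_prop, ?_⟩
        refine Measure.AbsolutelyContinuous.mk fun s hs h0 => ?_
        rw [Measure.restrict_apply hs] at h0
        rw [Measure.map_apply (by fun_prop) hs, Measure.restrict_apply (hs.preimage (by fun_prop))]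
        have : (fun t => μ * t) ⁻¹' s ∩ Ioi 0 = (fun t => μ * t) ⁻¹' (s ∩ Ioi 0) := by
          ext x; simp [hμ]
        rw [this, Real.volume_preimage_mul_left hμ.ne', h0, mul_zero]
      exact L1.1.comp_quasiMeasurePreserving hqm
    · intro T hT
      have := ((L1.2 (μ * T) (by positivity)).comp_mul_left (c := μ)).const_mul (c^2)
      rw [zero_div, mul_div_cancel_left₀ _ hμ.ne'] at this
      refine this.congr fun x _ => ?_
      simp only; ring
  have LD : L2loc (fun t => E t - c * E₁ (μ * t)) := by
    refine ⟨L.1.sub Lt.1, fun T hT => ?_⟩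
    have hm : AEStronglyMeasurable (fun t => (E t - c * E₁ (μ * t))^2)
        (volume.restrict (uIoc 0 T)) := by
      rw [uIoc_of_le hT.le]
      exact (((L.1.sub Lt.1).mono_set (fun x hx => hx.1)).pow 2)
    refine IntervalIntegrable.mono_fun' (((L.2 T hT).const_mul 2).add ((Lt.2 T hT).const_mul 2)) hm ?_
    refine ae_of_all _ fun x => ?_
    beta_reduce
    rw [Real.norm_eq_abs, abs_of_nonneg (sq_nonneg (E x - c * E₁ (μ * x)))]
    nlinarith [sq_nonneg (E x + c * E₁ (μ * x))]
  have key := volterra_unique (β := β) hα LD (fun t ht => ?_) ht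
  · exact sub_eq_zero.1 key
  have e1 := solves_eq h ht
  have e2 := solves_eq h₁ (show 0 < μ * t by positivity)
  have e3 : ∫ s in (0:ℝ)..t, fractionalKernel α (t - s) * (c * E₁ (μ * s)) =
      c * μ⁻¹ * c * ∫ s in (0:ℝ)..(μ * t), fractionalKernel α (μ * t - s) * E₁ s := by
    have := intervalIntegral.integral_comp_mul_left (a := 0) (b := t)
      (fun s => fractionalKernel α (μ * t - s) * E₁ s) hμ.ne'
    rw [mul_zero] at this
    have hx : ∫ s in (0:ℝ)..t, fractionalKernel α (t - s) * (c * E₁ (μ * s)) =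
        ∫ s in (0:ℝ)..t, (c * c) * (fractionalKernel α (μ * t - μ * s) * E₁ (μ * s)) := by
      apply intervalIntegral.integral_congr
      intro s hs
      rw [uIcc_of_le ht.le] at hs
      have := fk_scale (α := α) hμ (x := μ * t - μ * s) (by nlinarith [hs.2])
      rw [← mul_sub, mul_div_cancel_left₀ _ hμ.ne'] at this
      simp only [this, ← mul_sub]; ring
    rw [hx, intervalIntegral.integral_const_mul, this, smul_eq_mul]; ring
  have e4 : ∫ s in (0:ℝ)..t, fractionalKernel α (t - s) * (E s - c * E₁ (μ * s)) =
      (∫ s in (0:ℝ)..t, fractionalKernel α (t - s) * E s) -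
      ∫ s in (0:ℝ)..t, fractionalKernel α (t - s) * (c * E₁ (μ * s)) := by
    rw [← intervalIntegral.integral_sub (conv_ii hα L le_rfl ht.le le_rfl)
      (conv_ii hα Lt le_rfl ht.le le_rfl)]
    congr 1; ext s; ring
  have e5 := fk_scale (α := α) hμ (x := μ * t) (by positivity)
  rw [mul_div_cancel_left₀ _ hμ.ne'] at e5
  have e6 : β * (c * μ⁻¹) = -1 := by
    have : c * μ⁻¹ = |β|⁻¹ := by
      rw [hcd, Real.rpow_sub hμ, Real.rpow_one, hμα]; field_simp
    have hb0 := hβ.ne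
    rw [this, abs_of_neg hβ]; field_simp
  rw [e4, e3, e1, e2, e5]
  linear_combination ((c * ∫ s in (0:ℝ)..(μ * t), fractionalKernel α (μ * t - s) * E₁ s)) * e6

section one
variable {α : ℝ} {E : ℝ → ℝ} 

lemma E1_cont (hα : 1/2 < α) (hα1 : α < 1) (h : SolvesResolventEq (fractionalKernel α) (-1) E) :
    ContinuousOn E (Ioi 0) := by
  have L := solves_L2loc (by linarith) (by norm_num) h
  refine ((fk_contOn α).add ((conv_cont hα hα1 L).const_smul (-1:ℝ))).congr fun t ht => ?_
  exact solves_eq h ht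

lemma E1_pos (hα : 1/2 < α) (hα1 : α < 1) (h : SolvesResolventEq (fractionalKernel α) (-1) E)
    {t₁ : ℝ} (ht₁ : 0 < t₁) : 0 < E t₁ := by
  have hα0 : 0 < α := by linarith
  have L := solves_L2loc hα0 (by norm_num) h
  have hcont := E1_cont hα hα1 h
  by_contra hneg
  push Not at hneg
  -- positivity near zero
  obtain ⟨C, hC0, hC⟩ := conv_bdd hα L 1
  have hKinf : Tendsto (fractionalKernel α) (𝓝[>] 0) atTop := by
    have : Tendsto (fun x : ℝ => x ^ (α - 1)) (𝓝[>] 0) atTop := by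
      have := tendsto_rpow_neg_nhdsGT_zero (y := α - 1) (by linarith)
      simpa using this
    exact this.atTop_div_const (Real.Gamma_pos_of_pos hα0)
  obtain ⟨δ, hδ0, hδ⟩ : ∃ δ > 0, ∀ t, 0 < t → t < δ → 0 < E t := by
    have hev : ∀ᶠ t in 𝓝[>] (0:ℝ), 0 < E t := by
      filter_upwards [hKinf.eventually_gt_atTop C, Ioo_mem_nhdsGT (zero_lt_one (α := ℝ))] with t h1 h2
      rw [solves_eq h h2.1]
      have := (abs_le.1 (hC t h2.1 h2.2.le)).2
      linarith
    obtain ⟨δ, hδ, hsub⟩ := mem_nhdsGT_iff_exists_Ioo_subset.1 hev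
    exact ⟨δ, hδ, fun t h1 h2 => hsub ⟨h1, h2⟩⟩
  set d := δ / 2
  have hd0 : 0 < d := half_pos hδ0
  have hdt : d ≤ t₁ := by
    by_contra hlt
    push Not at hlt
    have := hδ t₁ ht₁ (by simp only [d] at hlt; linarith)
    linarith
  have hsub : Icc d t₁ ⊆ Ioi (0:ℝ) := fun x hx => lt_of_lt_of_le hd0 hx.1
  have hcl : IsCompact (Icc d t₁ ∩ E ⁻¹' Iic 0) :=
    isCompact_Icc.of_isClosed_subset
      ((hcont.mono hsub).preimage_isClosed_of_isClosed isClosed_Icc isClosed_Iic)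
      inter_subset_left
  obtain ⟨t₀, ht₀, hmin⟩ := hcl.exists_isLeast ⟨t₁, ⟨hdt, le_rfl⟩, hneg⟩
  have ht00 : 0 < t₀ := hsub ht₀.1
  have hE0 : E t₀ ≤ 0 := ht₀.2
  have hpos : ∀ t, 0 < t → t < t₀ → 0 < E t := by
    intro t h1 h2
    by_contra hn
    push Not at hn
    rcases lt_or_ge t d with hlt | hge
    · have := hδ t h1 (by simp only [d] at hlt; linarith); linarith
    · exact absurd (hmin ⟨⟨hge, h2.le.trans ht₀.1.2⟩, hn⟩) (not_le.2 h2)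
  -- the key inequality
  have key : ∀ t, 0 < t → t < t₀ → fractionalKernel α t₀ / fractionalKernel α t * E t ≤
      ∫ s in t..t₀, fractionalKernel α (t₀ - s) * E s := by
    intro t h1 h2
    have kt := fk_pos hα0 h1
    have kt0 := fk_pos hα0 ht00
    have i1 := conv_ii hα L (t := t₀) le_rfl h1.le h2.le
    have i2 := conv_ii hα L (t := t₀) h1.le h2.le le_rfl
    have i3 := conv_ii hα L (t := t) le_rfl h1.le le_rfl
    have e0 := solves_eq h ht00
    have e1 := solves_eq h h1
    rw [← intervalIntegral.integral_add_adjacent_intervals i1 i2] at e0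
    have hle : ∫ s in (0:ℝ)..t, fractionalKernel α (t₀ - s) * E s ≤
        ∫ s in (0:ℝ)..t, fractionalKernel α t₀ / fractionalKernel α t *
          (fractionalKernel α (t - s) * E s) := by
      apply intervalIntegral.integral_mono_on_of_le_Ioo h1.le i1 (i3.const_mul _)
      intro s hs
      rw [← mul_assoc]
      apply mul_le_mul_of_nonneg_right _ (hpos s hs.1 (hs.2.trans h2)).le
      rw [div_mul_eq_mul_div, le_div_iff₀ kt]
      unfold fractionalKernel
      rw [div_mul_div_comm, div_mul_div_comm]
      apply div_le_div_of_nonneg_right _ (mul_pos (Real.Gamma_pos_of_pos hα0)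
        (Real.Gamma_pos_of_pos hα0)).le
      have hs1 := hs.1
      have hs2 := hs.2
      rw [← Real.mul_rpow (by linarith) h1.le, ← Real.mul_rpow ht00.le (by linarith)]
      exact Real.rpow_le_rpow_of_nonpos (mul_pos ht00 (by linarith)) (by nlinarith) (by linarith)
    rw [intervalIntegral.integral_const_mul] at hle
    have hF : ∫ s in (0:ℝ)..t, fractionalKernel α (t - s) * E s = fractionalKernel α t - E t := by
      linarith
    rw [hF, mul_sub, div_mul_cancel₀ _ kt.ne'] at hle
    linarith
  -- choose a small step
  have hprim : Tendsto (fun u => ∫ s in (0:ℝ)..u, fractionalKernel α s) (𝓝 0) (𝓝 0) := by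
    have := (intervalIntegral.continuous_primitive (μ := volume) (fun a b => fk_ii hα0 a b) 0).tendsto 0
    simpa using this
  obtain ⟨u₀, hu₀, hball⟩ := Metric.eventually_nhds_iff.1
    (hprim.eventually (gt_mem_nhds (by norm_num : (0:ℝ) < 1/2)))
  set g := min (u₀ / 2) (t₀ / 2)
  have hg0 : 0 < g := lt_min (half_pos hu₀) (half_pos ht00)
  have hg1 : g ≤ u₀ / 2 := min_le_left _ _
  have hg2 : g ≤ t₀ / 2 := min_le_right _ _
  obtain ⟨t', ht', hmax⟩ := isCompact_Icc.exists_isMaxOn (s := Icc (t₀ - g) t₀) ⟨t₀, by linarith, le_rfl⟩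
    (hcont.mono fun x hx => by have := hx.1; rw [mem_Ioi]; linarith)
  have hM : 0 < E t' := lt_of_lt_of_le (hpos (t₀ - g) (by linarith) (by linarith))
    (hmax ⟨le_rfl, by linarith⟩)
  have htlt : t' < t₀ := lt_of_le_of_ne ht'.2 (fun he => by rw [he] at hM; linarith)
  have ht'0 : 0 < t' := by have := ht'.1; linarith
  have k1 := key t' ht'0 htlt
  have hub : ∫ s in t'..t₀, fractionalKernel α (t₀ - s) * E s ≤
      ∫ s in t'..t₀, fractionalKernel α (t₀ - s) * E t' := by
    have i4 : IntervalIntegrable (fun s => fractionalKernel α (t₀ - s)) volume t' t₀ := by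
      have := ((fk_ii hα0 (t₀ - t') (t₀ - t₀)).comp_sub_left t₀)
      simpa using this
    apply intervalIntegral.integral_mono_on_of_le_Ioo htlt.le
      (conv_ii hα L ht'0.le htlt.le le_rfl) (i4.mul_const _)
    intro s hs
    exact mul_le_mul_of_nonneg_left (hmax ⟨ht'.1.trans hs.1.le, hs.2.le⟩)
      (fk_pos hα0 (sub_pos.2 hs.2)).le
  rw [intervalIntegral.integral_mul_const,
    intervalIntegral.integral_comp_sub_left (fractionalKernel α) t₀, sub_self] at hub
  have hhalf := hball (y := t₀ - t') (by
    rw [Real.dist_eq, sub_zero, abs_of_pos (sub_pos.2 htlt)]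
    have := ht'.1; linarith)
  have hratio : 1/2 ≤ fractionalKernel α t₀ / fractionalKernel α t' := by
    have hk' := fk_pos hα0 ht'0
    rw [le_div_iff₀ hk']
    have a1 : fractionalKernel α t' ≤ fractionalKernel α (t₀ / 2) :=
      fk_anti hα0 hα1 (half_pos ht00) (by have := ht'.1; linarith)
    rw [fk_scale two_pos ht00.le] at a1
    have a2 : (2:ℝ) ^ (1 - α) ≤ 2 := by
      calc (2:ℝ) ^ (1 - α) ≤ 2 ^ (1:ℝ) := Real.rpow_le_rpow_of_exponent_le (by norm_num) (by linarith)
        _ = 2 := by norm_num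
    have a3 := fk_pos hα0 ht00
    nlinarith
  nlinarith

lemma E1_le (hα : 1/2 < α) (hα1 : α < 1) (h : SolvesResolventEq (fractionalKernel α) (-1) E)
    {t : ℝ} (ht : 0 < t) : E t ≤ fractionalKernel α t := by
  rw [solves_eq h ht]
  have : 0 ≤ ∫ s in (0:ℝ)..t, fractionalKernel α (t - s) * E s := by
    rw [intervalIntegral.integral_of_le ht.le, integral_Ioc_eq_integral_Ioo]
    exact setIntegral_nonneg measurableSet_Ioo fun s hs => mul_nonneg
      (fk_pos (by linarith) (sub_pos.2 hs.2)).le (E1_pos hα hα1 h hs.1).le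
  linarith

lemma E1_lap_int (hα : 1/2 < α) (hα1 : α < 1) (h : SolvesResolventEq (fractionalKernel α) (-1) E)
    {r : ℝ} (hr : 0 < r) : IntegrableOn (fun t => E t * Real.exp (-(r * t))) (Ioi 0) := by
  have hα0 : 0 < α := by linarith
  refine Integrable.mono' (laplace_fk_int hα0 hr) ?_ ?_
  · exact (solves_aesm hα0 (by norm_num) h).mul (by fun_prop : Measurable _).aestronglyMeasurable
  · refine (ae_restrict_iff' measurableSet_Ioi).2 (ae_of_all _ fun t ht => ?_)
    rw [norm_mul, Real.norm_eq_abs, Real.norm_eq_abs, abs_of_pos (E1_pos hα hα1 h ht), Real.abs_exp]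
    gcongr
    exact E1_le hα hα1 h ht

lemma E1_laplace (hα : 1/2 < α) (hα1 : α < 1) (h : SolvesResolventEq (fractionalKernel α) (-1) E)
    {r : ℝ} (hr : 0 < r) : ∫ t in Ioi (0:ℝ), E t * Real.exp (-(r * t)) = (1 + r ^ α)⁻¹ := by
  have hα0 : 0 < α := by linarith
  have iE := E1_lap_int hα hα1 h hr
  have iK := laplace_fk_int hα0 hr
  have h1 := integral_posConvolution iE iK (ContinuousLinearMap.mul ℝ ℝ)
  rw [laplace_fk hα0 hr] at h1
  have h2 : ∫ x in Ioi (0:ℝ), ∫ t in (0:ℝ)..x, (ContinuousLinearMap.mul ℝ ℝ)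
      (E t * Real.exp (-(r * t))) (fractionalKernel α (x - t) * Real.exp (-(r * (x - t)))) =
      ∫ x in Ioi (0:ℝ), (fractionalKernel α x * Real.exp (-(r * x)) - E x * Real.exp (-(r * x))) := by
    refine setIntegral_congr_fun measurableSet_Ioi fun x hx => ?_
    have e := solves_eq h hx
    have : ∀ t, (ContinuousLinearMap.mul ℝ ℝ)
      (E t * Real.exp (-(r * t))) (fractionalKernel α (x - t) * Real.exp (-(r * (x - t)))) =
      Real.exp (-(r * x)) * (fractionalKernel α (x - t) * E t) := by
      intro t
      have : Real.exp (-(r * t)) * Real.exp (-(r * (x - t))) = Real.exp (-(r * x)) := by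
        rw [← Real.exp_add]; congr 1; ring
      rw [← this]; simp only [ContinuousLinearMap.mul_apply']; ring
    simp only [this]
    rw [intervalIntegral.integral_const_mul, ← sub_mul]
    rw [mul_comm]; congr 1; linarith
  rw [h2, integral_sub iK iE, laplace_fk hα0 hr] at h1
  simp only [ContinuousLinearMap.mul_apply'] at h1
  rw [one_div, Real.inv_rpow hr.le] at h1
  have hp : 0 < r ^ α := Real.rpow_pos_of_pos hr _
  field_simp at h1 ⊢
  linarith

lemma E1_integrable (hα : 1/2 < α) (hα1 : α < 1)
    (h : SolvesResolventEq (fractionalKernel α) (-1) E) : IntegrableOn E (Ioi 0) := by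
  have hα0 : 0 < α := by linarith
  have hi : ∀ i : ℝ, IntegrableOn E (Ioc 0 i) := by
    intro i
    refine Integrable.mono' ((intervalIntegrable_iff.1 (fk_ii hα0 0 i)).mono_set
      (fun x hx => by rw [uIoc]; exact ⟨by simpa using Or.inl hx.1, by simpa using Or.inr hx.2⟩)) ?_ ?_
    · exact (solves_aesm hα0 (by norm_num) h).mono_set fun x hx => hx.1
    · refine (ae_restrict_iff' measurableSet_Ioc).2 (ae_of_all _ fun t ht => ?_)
      rw [Real.norm_eq_abs, abs_of_pos (E1_pos hα hα1 h ht.1)]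
      exact E1_le hα hα1 h ht.1
  refine integrableOn_Ioi_of_intervalIntegral_norm_bounded (l := atTop) (b := id) (Real.exp 1) 0 hi tendsto_id ?_
  filter_upwards [eventually_gt_atTop 0] with T hT
  have hT' : 0 < T⁻¹ := inv_pos.2 hT
  have iE := E1_lap_int hα hα1 h hT'
  have e := E1_laplace hα hα1 h hT'
  simp only [id]
  rw [intervalIntegral.integral_of_le hT.le]
  calc ∫ x in Ioc 0 T, ‖E x‖ ≤ ∫ x in Ioc 0 T, Real.exp 1 * (E x * Real.exp (-(T⁻¹ * x))) := by
        refine setIntegral_mono_on (hi T).norm ((iE.mono_set fun x hx => hx.1).const_mul _)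
          measurableSet_Ioc fun x hx => ?_
        have p := E1_pos hα hα1 h hx.1
        rw [Real.norm_eq_abs, abs_of_pos p, mul_left_comm, ← Real.exp_add]
        refine le_mul_of_one_le_right p.le (Real.one_le_exp ?_)
        have : T⁻¹ * x ≤ 1 := by rw [inv_mul_le_iff₀ hT]; linarith [hx.2]
        linarith
    _ = Real.exp 1 * ∫ x in Ioc 0 T, (E x * Real.exp (-(T⁻¹ * x))) := integral_const_mul _ _
    _ ≤ Real.exp 1 * ∫ x in Ioi 0, (E x * Real.exp (-(T⁻¹ * x))) := by
        refine mul_le_mul_of_nonneg_left ?_ (Real.exp_pos _).le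
        apply setIntegral_mono_set iE
        · exact (ae_restrict_iff' measurableSet_Ioi).2 (ae_of_all _ fun x hx =>
            mul_nonneg (E1_pos hα hα1 h hx).le (Real.exp_pos _).le)
        · exact ae_of_all _ fun x hx => hx.1
    _ ≤ Real.exp 1 := by
        rw [e]
        refine mul_le_of_le_one_right (Real.exp_pos _).le (inv_le_one_of_one_le₀ ?_)
        have := Real.rpow_nonneg hT'.le α
        linarith

lemma E1_KE_integrable (hα : 1/2 < α) (hα1 : α < 1)
    (h : SolvesResolventEq (fractionalKernel α) (-1) E) :
    IntegrableOn (fun t => fractionalKernel α t * E t) (Ioi 0) := by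
  have hα0 : 0 < α := by linarith
  have hm : AEStronglyMeasurable (fun t => fractionalKernel α t * E t) (volume.restrict (Ioi 0)) :=
    (fk_meas α).aestronglyMeasurable.mul (solves_aesm hα0 (by norm_num) h)
  rw [← Ioc_union_Ioi_eq_Ioi (zero_le_one (α := ℝ))]
  refine IntegrableOn.union ?_ ?_
  · have := (intervalIntegrable_iff_integrableOn_Ioc_of_le zero_le_one).1
      (fk_sq_ii hα le_rfl zero_le_one)
    refine Integrable.mono' this (hm.mono_set fun x hx => hx.1) ?_
    refine (ae_restrict_iff' measurableSet_Ioc).2 (ae_of_all _ fun t ht => ?_)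
    have p := E1_pos hα hα1 h ht.1
    have k := fk_pos hα0 ht.1
    have l := E1_le hα hα1 h ht.1
    rw [Real.norm_eq_abs, abs_of_pos (mul_pos k p)]
    nlinarith
  · refine Integrable.mono' (((E1_integrable hα hα1 h).mono_set
      (Ioi_subset_Ioi zero_le_one)).const_mul (fractionalKernel α 1))
      (hm.mono_set (Ioi_subset_Ioi zero_le_one)) ?_
    refine (ae_restrict_iff' measurableSet_Ioi).2 (ae_of_all _ fun t ht => ?_)
    have ht0 : (0:ℝ) < t := lt_trans one_pos ht
    have p := E1_pos hα hα1 h ht0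
    have k := fk_pos hα0 ht0
    have l := fk_anti hα0 hα1 one_pos (le_of_lt ht)
    rw [Real.norm_eq_abs, abs_of_pos (mul_pos k p)]
    nlinarith

lemma E1_sq_integrable (hα : 1/2 < α) (hα1 : α < 1)
    (h : SolvesResolventEq (fractionalKernel α) (-1) E) :
    IntegrableOn (fun t => E t ^ 2) (Ioi 0) := by
  refine Integrable.mono' (E1_KE_integrable hα hα1 h)
    ((solves_aesm (by linarith) (by norm_num) h).pow 2) ?_
  refine (ae_restrict_iff' measurableSet_Ioi).2 (ae_of_all _ fun t ht => ?_)
  have p := E1_pos hα hα1 h ht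
  have l := E1_le hα hα1 h ht
  rw [Real.norm_eq_abs, abs_of_nonneg (sq_nonneg _)]
  nlinarith
end one

end

section
open MeasureTheory Set Filter
open scoped ENNReal NNReal Topology


variable {α : ℝ} {E : ℝ → ℝ}

/-- complex Laplace transform -/
def cLap (E : ℝ → ℝ) (z : ℂ) : ℂ := ∫ t in Ioi (0:ℝ), (E t : ℂ) * Complex.exp (-(z * t))

lemma cLap_int (hi : IntegrableOn E (Ioi 0)) {z : ℂ} (hz : 0 ≤ z.re) :
    IntegrableOn (fun t : ℝ => (E t : ℂ) * Complex.exp (-(z * t))) (Ioi 0) := by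
  refine Integrable.mono' hi.norm
    ((Complex.continuous_ofReal.comp_aestronglyMeasurable hi.1).mul
      (by fun_prop : Continuous _).aestronglyMeasurable) ?_
  refine (ae_restrict_iff' measurableSet_Ioi).2 (ae_of_all _ fun t ht => ?_)
  rw [norm_mul, Complex.norm_exp, Complex.norm_real]
  refine mul_le_of_le_one_right (norm_nonneg _) (Real.exp_le_one_iff.2 ?_)
  simp only [Complex.neg_re, Complex.mul_re, Complex.ofReal_re, Complex.ofReal_im, mul_zero, sub_zero]
  have := mul_nonneg hz (le_of_lt ht)
  linarith

lemma cLap_tendsto (hi : IntegrableOn E (Ioi 0)) {z : ℕ → ℂ} {z₀ : ℂ} (hz : ∀ n, 0 ≤ (z n).re)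
    (hlim : Tendsto z atTop (𝓝 z₀)) : Tendsto (fun n => cLap E (z n)) atTop (𝓝 (cLap E z₀)) := by
  unfold cLap
  refine tendsto_integral_of_dominated_convergence (fun t => ‖E t‖)
    (fun n => (cLap_int hi (hz n)).1) hi.norm (fun n => ?_) ?_
  · refine (ae_restrict_iff' measurableSet_Ioi).2 (ae_of_all _ fun t ht => ?_)
    rw [norm_mul, Complex.norm_exp, Complex.norm_real]
    refine mul_le_of_le_one_right (norm_nonneg _) (Real.exp_le_one_iff.2 ?_)
    simp only [Complex.neg_re, Complex.mul_re, Complex.ofReal_re, Complex.ofReal_im, mul_zero, sub_zero]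
    have := mul_nonneg (hz n) (le_of_lt ht)
    linarith
  · refine ae_of_all _ fun t => ?_
    have hc : Continuous fun w : ℂ => (E t : ℂ) * Complex.exp (-(w * t)) := by fun_prop
    exact (hc.tendsto z₀).comp hlim

lemma cLap_diff (hi : IntegrableOn E (Ioi 0)) {z : ℂ} (hz : 0 < z.re) :
    DifferentiableAt ℂ (cLap E) z := by
  set c := z.re / 2 with hc
  have hc0 : 0 < c := by positivity
  have hre : ∀ w ∈ Metric.ball z c, c ≤ w.re := by
    intro w hw
    rw [Metric.mem_ball, dist_eq_norm] at hw
    have := (Complex.abs_re_le_norm (w - z)).trans hw.le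
    rw [Complex.sub_re, abs_le] at this
    linarith [this.1]
  have key := hasDerivAt_integral_of_dominated_loc_of_deriv_le
    (μ := volume.restrict (Ioi (0:ℝ))) (F := fun w t => (E t : ℂ) * Complex.exp (-(w * (t:ℝ))))
    (F' := fun w t => (E t : ℂ) * (Complex.exp (-(w * (t:ℝ))) * (-t))) (x₀ := z)
    (s := Metric.ball z c) (bound := fun t => ‖E t‖ * c⁻¹) (Metric.ball_mem_nhds z hc0) ?_ ?_ ?_ ?_ ?_ ?_
  · exact key.2.differentiableAt
  · filter_upwards [Metric.ball_mem_nhds z hc0] with w hw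
    exact (cLap_int hi (hc0.le.trans (hre w hw))).1
  · exact cLap_int hi hz.le
  · exact (Complex.continuous_ofReal.comp_aestronglyMeasurable hi.1).mul
      (by fun_prop : Continuous _).aestronglyMeasurable
  · refine (ae_restrict_iff' measurableSet_Ioi).2 (ae_of_all _ fun t ht w hw => ?_)
    have ht' : 0 < t := ht
    rw [norm_mul, norm_mul, Complex.norm_exp, Complex.norm_real, norm_neg, Complex.norm_real,
      Real.norm_of_nonneg ht'.le]
    refine mul_le_mul_of_nonneg_left ?_ (norm_nonneg _)
    simp only [Complex.neg_re, Complex.mul_re, Complex.ofReal_re, Complex.ofReal_im, mul_zero, sub_zero]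
    have h1 : c * t ≤ w.re * t := mul_le_mul_of_nonneg_right (hre w hw) ht'.le
    have h2 : c * t ≤ Real.exp (w.re * t) := by
      have := Real.add_one_le_exp (w.re * t); linarith
    rw [Real.exp_neg, ← div_eq_inv_mul, div_le_iff₀ (Real.exp_pos _), ← div_eq_inv_mul, le_div_iff₀ hc0]
    linarith
  · exact hi.norm.mul_const _
  · refine ae_of_all _ fun t w _ => ?_
    have : HasDerivAt (fun w : ℂ => -(w * (t:ℂ))) (-t) w := by
      have := ((hasDerivAt_id w).mul_const (t:ℂ)).neg
      rw [one_mul] at this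
      exact this
    exact (this.cexp).const_mul _

lemma one_add_cpow_ne (hα0 : 0 < α) (hα1 : α < 1) {z : ℂ} (hz : 0 ≤ z.re) :
    (1 : ℂ) + z ^ (α:ℂ) ≠ 0 := by
  intro h
  have := congrArg Complex.re h
  rw [Complex.add_re, Complex.cpow_ofReal_re] at this
  have h1 : |Complex.arg z| ≤ Real.pi / 2 := Complex.abs_arg_le_pi_div_two_iff.2 hz
  have h2 : 0 ≤ Real.cos (Complex.arg z * α) := by
    have h3 : |Complex.arg z * α| ≤ Real.pi / 2 := by
      rw [abs_mul, abs_of_pos hα0]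
      nlinarith [abs_nonneg (Complex.arg z)]
    rw [abs_le] at h3
    exact Real.cos_nonneg_of_mem_Icc ⟨by linarith [h3.1], h3.2⟩
  have h3 : 0 ≤ ‖z‖ ^ α := by positivity
  simp at this
  nlinarith [mul_nonneg h3 h2]

lemma cLap_eq (hα : 1/2 < α) (hα1 : α < 1) (h : SolvesResolventEq (fractionalKernel α) (-1) E)
    {z : ℂ} (hz : 0 < z.re) : cLap E z = (1 + z ^ (α:ℂ))⁻¹ := by
  have hα0 : 0 < α := by linarith
  have hi := E1_integrable hα hα1 h
  have ho : IsOpen {z : ℂ | 0 < z.re} := isOpen_lt continuous_const Complex.continuous_re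
  have hX : AnalyticOnNhd ℂ (cLap E) {z : ℂ | 0 < z.re} :=
    DifferentiableOn.analyticOnNhd (fun w hw => (cLap_diff hi hw).differentiableWithinAt) ho
  have hY : AnalyticOnNhd ℂ (fun z : ℂ => (1 + z ^ (α:ℂ))⁻¹) {z : ℂ | 0 < z.re} := by
    refine DifferentiableOn.analyticOnNhd (fun w hw => DifferentiableAt.differentiableWithinAt ?_) ho
    refine DifferentiableAt.inv ?_ (one_add_cpow_ne hα0 hα1 (le_of_lt hw))
    exact (differentiableAt_const _).add
      (differentiableAt_id.cpow (differentiableAt_const _) (Or.inl hw))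
  refine AnalyticOnNhd.eqOn_of_preconnected_of_frequently_eq hX hY
    (convex_halfSpace_re_gt 0).isPreconnected (z₀ := ((1:ℝ) : ℂ)) (by simp) ?_ hz
  have h_real : ∃ᶠ (x : ℝ) in 𝓝[≠] (1:ℝ), cLap E x = (1 + (x:ℂ) ^ (α:ℂ))⁻¹ := by
    refine Eventually.frequently ?_
    have : ∀ᶠ x : ℝ in 𝓝[≠] (1:ℝ), 0 < x := nhdsWithin_le_nhds (lt_mem_nhds one_pos)
    filter_upwards [this] with x hx
    have e := E1_laplace hα hα1 h hx
    have : cLap E x = ((∫ t in Ioi (0:ℝ), E t * Real.exp (-(x * t)) : ℝ) : ℂ) := by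
      rw [← integral_complex_ofReal]
      unfold cLap
      congr 1; ext t; push_cast; rfl
    rw [this, e]
    push_cast
    rw [Complex.ofReal_cpow hx.le]
  rw [frequently_iff_seq_forall] at h_real ⊢
  obtain ⟨xs, hx_tendsto, hx_eq⟩ := h_real
  refine ⟨fun n ↦ xs n, ?_, fun n ↦ ?_⟩
  · rw [tendsto_nhdsWithin_iff] at hx_tendsto ⊢
    constructor
    · exact (Complex.continuous_ofReal.tendsto _).comp hx_tendsto.1
    · filter_upwards [hx_tendsto.2] with n hn
      simpa using hn
  · exact hx_eq n

lemma cLap_eq' (hα : 1/2 < α) (hα1 : α < 1) (h : SolvesResolventEq (fractionalKernel α) (-1) E)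
    (x : ℝ) : cLap E (x * Complex.I) = (1 + (x * Complex.I) ^ (α:ℂ))⁻¹ := by
  have hα0 : 0 < α := by linarith
  have hi := E1_integrable hα hα1 h
  have hlim : Tendsto (fun n : ℕ => ((1 / ((n:ℝ) + 1) : ℝ) : ℂ) + x * Complex.I) atTop
      (𝓝 (x * Complex.I)) := by
    have := ((Complex.continuous_ofReal.tendsto 0).comp
      (tendsto_one_div_add_atTop_nhds_zero_nat (𝕜 := ℝ))).add_const (x * Complex.I)
    simpa [Function.comp_def] using this
  have hpos : ∀ n : ℕ, 0 < (((1 / ((n:ℝ) + 1) : ℝ) : ℂ) + x * Complex.I).re := by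
    intro n
    simp only [Complex.add_re, Complex.ofReal_re, Complex.mul_re, Complex.I_re, Complex.I_im,
      Complex.ofReal_im]
    have : (0:ℝ) < 1 / ((n:ℝ) + 1) := by positivity
    linarith
  have h1 := cLap_tendsto hi (fun n => (hpos n).le) hlim
  refine tendsto_nhds_unique h1 ?_
  simp_rw [fun n => cLap_eq hα hα1 h (hpos n)]
  refine Tendsto.inv₀ (tendsto_const_nhds.add ?_) (one_add_cpow_ne hα0 hα1 (by simp))
  have hc : ContinuousAt (fun z : ℂ => z ^ (α:ℂ)) (x * Complex.I) := by
    by_cases hx : x = 0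
    · subst hx
      have := Complex.continuousAt_cpow_const_of_re_pos (z := ((0:ℝ) * Complex.I)) (w := (α:ℂ))
        (Or.inl (by simp)) (by simpa using hα0)
      exact this
    · refine continuousAt_cpow_const ?_
      rw [Complex.mem_slitPlane_iff]
      right; simpa using hx
  exact hc.tendsto.comp hlim

lemma E1_int_one (hα : 1/2 < α) (hα1 : α < 1) (h : SolvesResolventEq (fractionalKernel α) (-1) E) :
    ∫ t in Ioi (0:ℝ), E t = 1 := by
  have e := cLap_eq' hα hα1 h 0
  have hα0 : (α:ℂ) ≠ 0 := by
    have : α ≠ 0 := by linarith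
    exact_mod_cast this
  unfold cLap at e
  simp [Complex.zero_cpow hα0] at e
  rw [integral_complex_ofReal] at e
  exact_mod_cast e

/-- autocorrelation -/
def autoc (E : ℝ → ℝ) (x : ℝ) : ℝ := ∫ r in Ioi (0:ℝ), E (x + r) * E r

lemma normSq_cLap (hα : 1/2 < α) (hα1 : α < 1) (h : SolvesResolventEq (fractionalKernel α) (-1) E)
    (x : ℝ) : Complex.normSq (cLap E (x * Complex.I)) =
      1 / (1 + 2 * |x| ^ α * Real.cos (Real.pi * α / 2) + |x| ^ (2 * α)) := by
  have hα0 : 0 < α := by linarith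
  rw [cLap_eq' hα hα1 h, map_inv₀, one_div]
  congr 1
  have hn : ‖(x:ℂ) * Complex.I‖ = |x| := by simp
  rw [Complex.normSq_apply, Complex.add_re, Complex.add_im, Complex.cpow_ofReal_re,
    Complex.cpow_ofReal_im, hn, mul_comm 2 α, Real.rpow_mul (abs_nonneg x)]
  have hx2 : (|x| ^ α) ^ (2:ℝ) = (|x| ^ α) ^ 2 := by norm_cast
  rw [hx2]
  have main : ∀ θ : ℝ, Real.cos θ = Real.cos (Real.pi * α / 2) →
      ((1:ℂ).re + |x| ^ α * Real.cos θ) * ((1:ℂ).re + |x| ^ α * Real.cos θ) +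
      ((1:ℂ).im + |x| ^ α * Real.sin θ) * ((1:ℂ).im + |x| ^ α * Real.sin θ) =
      1 + 2 * |x| ^ α * Real.cos (Real.pi * α / 2) + (|x| ^ α) ^ 2 := by
    intro θ hθ
    rw [← hθ]
    simp only [Complex.one_re, Complex.one_im]
    linear_combination (|x| ^ α) ^ 2 * Real.sin_sq_add_cos_sq θ
  rcases lt_trichotomy x 0 with hx | hx | hx
  · apply main
    have : Complex.arg (x * Complex.I) = -(Real.pi / 2) := by
      have e : (x:ℂ) * Complex.I = ((-x : ℝ) : ℂ) * (-Complex.I) := by push_cast; ring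
      rw [e, Complex.arg_real_mul _ (by linarith), Complex.arg_neg_I]
    rw [this, ← Real.cos_neg]; congr 1; ring
  · subst hx
    simp [Real.zero_rpow hα0.ne']
  · apply main
    rw [Complex.arg_real_mul _ hx, Complex.arg_I]; congr 1; ring

end

section
open MeasureTheory Set Filter
open scoped ENNReal NNReal Topology


variable {α : ℝ} {E : ℝ → ℝ}

lemma Cden_ge (hα : 1/2 < α) (hα1 : α < 1) {u : ℝ} (hu : 0 ≤ u) :
    1 + u ^ (2 * α) ≤ 1 + 2 * u ^ α * Real.cos (Real.pi * α / 2) + u ^ (2 * α) := by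
  have h1 : 0 ≤ Real.cos (Real.pi * α / 2) :=
    Real.cos_nonneg_of_mem_Icc ⟨by nlinarith [Real.pi_pos], by nlinarith [Real.pi_pos]⟩
  have h2 : 0 ≤ u ^ α := by positivity
  nlinarith [mul_nonneg h2 h1]

lemma Cint (hα : 1/2 < α) (hα1 : α < 1) :
    Integrable (fun u : ℝ => 1 / (1 + 2 * |u| ^ α * Real.cos (Real.pi * α / 2) + |u| ^ (2 * α))) := by
  have hI := (integrable_one_add_norm (E := ℝ) (μ := volume) (r := 2 * α) (by simp; linarith)).const_mul 4
  refine hI.mono' (by fun_prop : Measurable _).aestronglyMeasurable (ae_of_all _ fun u => ?_)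
  have hu := abs_nonneg u
  have h1 := Cden_ge hα hα1 hu
  have h3 : 0 ≤ |u| ^ (2 * α) := by positivity
  rw [Real.norm_of_nonneg (one_div_nonneg.2 (by linarith)), Real.rpow_neg (by positivity), Real.norm_eq_abs,
    ← div_eq_mul_inv, div_le_div_iff₀ (by linarith) (by positivity), one_mul]
  have h4 : (1 + |u|) ^ (2 * α) ≤ 4 * (1 + |u| ^ (2 * α)) := by
    have h2 : (2:ℝ) ^ (2 * α) ≤ 4 := by
      calc (2:ℝ) ^ (2 * α) ≤ 2 ^ (2:ℝ) := Real.rpow_le_rpow_of_exponent_le (by norm_num) (by linarith)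
        _ = 4 := by norm_num
    rcases le_total |u| 1 with h | h
    · have : (1 + |u|) ^ (2 * α) ≤ 2 ^ (2 * α) :=
        Real.rpow_le_rpow (by positivity) (by linarith) (by linarith)
      linarith
    · have : (1 + |u|) ^ (2 * α) ≤ (2 * |u|) ^ (2 * α) :=
        Real.rpow_le_rpow (by positivity) (by linarith) (by linarith)
      rw [Real.mul_rpow (by norm_num) hu] at this
      nlinarith
  linarith

open scoped FourierTransform Convolution

lemma autoc_conv (hi : IntegrableOn E (Ioi 0)) (x : ℝ) :
    ((fun t : ℝ => (((Ioi (0:ℝ)).indicator E t : ℝ) : ℂ)) ⋆[ContinuousLinearMap.mul ℂ ℂ]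
      (fun t : ℝ => (((Ioi (0:ℝ)).indicator E (-t) : ℝ) : ℂ))) x = (autoc E |x| : ℂ) := by
  have hneg : ∀ y : ℝ, 0 ≤ y → ∫ t, (Ioi (0:ℝ)).indicator E t * (Ioi (0:ℝ)).indicator E (t + y) =
      autoc E y := by
    intro y hy
    unfold autoc
    rw [← integral_indicator measurableSet_Ioi]
    congr 1; ext t
    by_cases ht : 0 < t
    · have h1 : t ∈ Ioi (0:ℝ) := ht
      have h2 : t + y ∈ Ioi (0:ℝ) := by show 0 < t + y; linarith
      simp only [indicator_of_mem h1, indicator_of_mem h2]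
      rw [add_comm y t, mul_comm]
    · have h1 : t ∉ Ioi (0:ℝ) := ht
      simp only [indicator_of_notMem h1, zero_mul]
  rw [convolution_def]
  simp only [ContinuousLinearMap.mul_apply']
  simp_rw [← Complex.ofReal_mul]
  rw [integral_complex_ofReal]
  congr 1
  rcases le_total x 0 with hx | hx
  · rw [abs_of_nonpos hx, ← hneg (-x) (by linarith)]
    congr 1; ext t; congr 2; ring
  · rw [abs_of_nonneg hx, ← hneg x hx]
    rw [← integral_add_right_eq_self (fun t => (Ioi (0:ℝ)).indicator E t *
      (Ioi (0:ℝ)).indicator E (-(x - t))) x]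
    congr 1; ext t; rw [mul_comm]; congr 2; ring

lemma autoc_cont (hα : 1/2 < α) (hα1 : α < 1) (h : SolvesResolventEq (fractionalKernel α) (-1) E) :
    Continuous (fun x => autoc E |x|) := by
  rw [continuous_iff_continuousAt]
  intro x₀
  have hα0 : 0 < α := by linarith
  have hc := E1_cont hα hα1 h
  have hm := fun y : ℝ => fun hy : 0 ≤ y =>
    (show ContinuousOn (fun r => E (y + r) * E r) (Ioi 0) from
      (hc.comp (by fun_prop) (fun r (hr : 0 < r) => by show 0 < y + r; linarith)).mul hc)
  unfold ContinuousAt autoc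
  refine tendsto_integral_filter_of_dominated_convergence
    (fun t => fractionalKernel α t * E t) ?_ ?_ (E1_KE_integrable hα hα1 h) ?_
  · exact Eventually.of_forall fun x => (hm |x| (abs_nonneg x)).aestronglyMeasurable measurableSet_Ioi
  · refine Eventually.of_forall fun x => ?_
    refine (ae_restrict_iff' measurableSet_Ioi).2 (ae_of_all _ fun t (ht : 0 < t) => ?_)
    have hp : 0 < |x| + t := by positivity
    rw [norm_mul, Real.norm_of_nonneg (E1_pos hα hα1 h hp).le, Real.norm_of_nonneg (E1_pos hα hα1 h ht).le]
    refine mul_le_mul_of_nonneg_right ?_ (E1_pos hα hα1 h ht).le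
    exact (E1_le hα hα1 h hp).trans (fk_anti hα0 hα1 ht (by linarith [abs_nonneg x]))
  · refine (ae_restrict_iff' measurableSet_Ioi).2 (ae_of_all _ fun t (ht : 0 < t) => ?_)
    refine Tendsto.mul_const _ ?_
    have h1 : ContinuousAt E (|x₀| + t) := hc.continuousAt (Ioi_mem_nhds (by positivity))
    exact h1.tendsto.comp ((by fun_prop : Continuous fun x : ℝ => |x| + t).tendsto x₀)

lemma fourier_eC (hi : IntegrableOn E (Ioi 0)) (ξ : ℝ) :
    𝓕 (fun t : ℝ => (((Ioi (0:ℝ)).indicator E t : ℝ) : ℂ)) ξ =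
      cLap E ((2 * Real.pi * ξ : ℝ) * Complex.I) := by
  rw [Real.fourier_real_eq_integral_exp_smul]
  unfold cLap
  rw [← integral_indicator measurableSet_Ioi]
  congr 1; ext t
  by_cases ht : 0 < t
  · rw [indicator_of_mem (by exact ht), indicator_of_mem (by exact ht), smul_eq_mul, mul_comm]
    congr 2; push_cast; ring
  · rw [indicator_of_notMem (by simpa using ht), indicator_of_notMem (by simpa using ht)]
    simp

lemma fourier_eC' (hi : IntegrableOn E (Ioi 0)) (ξ : ℝ) :
    𝓕 (fun t : ℝ => (((Ioi (0:ℝ)).indicator E (-t) : ℝ) : ℂ)) ξ =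
      (starRingEnd ℂ) (cLap E ((2 * Real.pi * ξ : ℝ) * Complex.I)) := by
  rw [← fourier_eC hi, Real.fourier_real_eq_integral_exp_smul, Real.fourier_real_eq_integral_exp_smul,
    ← integral_conj, ← integral_neg_eq_self]
  congr 1; ext t
  simp only [smul_eq_mul, map_mul, Complex.conj_ofReal, ← Complex.exp_conj, Complex.conj_I]
  rw [neg_neg]
  congr 2; push_cast; ring

lemma E1_sq_int (hα : 1/2 < α) (hα1 : α < 1) (h : SolvesResolventEq (fractionalKernel α) (-1) E) :
    ∫ t in Ioi (0:ℝ), E t ^ 2 = Calpha α := by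
  have hi := E1_integrable hα hα1 h
  have i1 : Integrable (fun t : ℝ => (((Ioi (0:ℝ)).indicator E t : ℝ) : ℂ)) :=
    ((integrable_indicator_iff measurableSet_Ioi).2 hi).ofReal
  have i2 : Integrable (fun t : ℝ => (((Ioi (0:ℝ)).indicator E (-t) : ℝ) : ℂ)) := i1.comp_neg
  have iA := i1.integrable_convolution (ContinuousLinearMap.mul ℂ ℂ) i2
  have fA : ∀ ξ, 𝓕 ((fun t : ℝ => (((Ioi (0:ℝ)).indicator E t : ℝ) : ℂ)) ⋆[ContinuousLinearMap.mul ℂ ℂ]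
      (fun t : ℝ => (((Ioi (0:ℝ)).indicator E (-t) : ℝ) : ℂ))) ξ =
      ((1 / (1 + 2 * |2 * Real.pi * ξ| ^ α * Real.cos (Real.pi * α / 2) +
        |2 * Real.pi * ξ| ^ (2 * α)) : ℝ) : ℂ) := by
    intro ξ
    rw [Real.fourier_mul_convolution_eq i1 i2, fourier_eC hi, fourier_eC' hi, Complex.mul_conj,
      normSq_cLap hα hα1 h]
  have hA : (fun t : ℝ => (((Ioi (0:ℝ)).indicator E t : ℝ) : ℂ)) ⋆[ContinuousLinearMap.mul ℂ ℂ]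
      (fun t : ℝ => (((Ioi (0:ℝ)).indicator E (-t) : ℝ) : ℂ)) = fun x => (autoc E |x| : ℂ) :=
    funext fun x => autoc_conv hi x
  rw [hA] at iA fA
  have hpi : 2 * Real.pi ≠ 0 := by positivity
  have ifA : Integrable (𝓕 (fun x => (autoc E |x| : ℂ))) := by
    rw [show 𝓕 (fun x => (autoc E |x| : ℂ)) = _ from funext fA]
    exact ((Cint hα hα1).comp_mul_left' hpi).ofReal
  have inv := iA.fourierInv_fourier_eq ifA (v := 0)
    (Complex.continuous_ofReal.continuousAt.comp (autoc_cont hα hα1 h).continuousAt)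
  rw [Real.fourierInv_eq'] at inv
  simp only [inner_zero_right, mul_zero, Complex.ofReal_zero, zero_mul, Complex.exp_zero, one_smul, abs_zero] at inv
  rw [show (fun v => 𝓕 (fun x => (autoc E |x| : ℂ)) v) = _ from funext fA, integral_complex_ofReal] at inv
  have inv' := Complex.ofReal_injective inv
  have e1 : autoc E 0 = ∫ t in Ioi (0:ℝ), E t ^ 2 := by
    unfold autoc; congr 1; ext t; rw [zero_add]; ring
  rw [← e1, ← inv']
  have := Measure.integral_comp_mul_left (fun u : ℝ => 1 / (1 + 2 * |u| ^ α * Real.cos (Real.pi * α / 2)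
    + |u| ^ (2 * α))) (2 * Real.pi)
  rw [this, integral_comp_abs (f := fun u : ℝ => 1 / (1 + 2 * u ^ α * Real.cos (Real.pi * α / 2)
    + u ^ (2 * α))), abs_of_pos (by positivity)]
  unfold Calpha
  rw [smul_eq_mul, ← mul_assoc]
  congr 1
  field_simp

lemma Calpha_pos (hα : 1/2 < α) (hα1 : α < 1)
    (h : SolvesResolventEq (fractionalKernel α) (-1) E) : 0 < Calpha α := by
  rw [← E1_sq_int hα hα1 h]
  rw [setIntegral_pos_iff_support_of_nonneg_ae]
  · have : Function.support (fun t => E t ^ 2) ∩ Ioi 0 = Ioi 0 := by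
      refine inter_eq_right.2 fun t ht => ?_
      have := E1_pos hα hα1 h ht
      simp [this.ne']
    rw [this]; simp
  · exact ae_of_all _ fun t => sq_nonneg _
  · exact E1_sq_integrable hα hα1 h

end

section
open MeasureTheory Set Filter
open scoped ENNReal NNReal Topology


variable {α : ℝ} {E : ℝ → ℝ}

open scoped Convolution in
lemma autoc_int (hα : 1/2 < α) (hα1 : α < 1) (h : SolvesResolventEq (fractionalKernel α) (-1) E) :
    Integrable (fun x => autoc E |x|) ∧ ∫ x, autoc E |x| = 1 := by
  have hi := E1_integrable hα hα1 h
  have i1 : Integrable (fun t : ℝ => (((Ioi (0:ℝ)).indicator E t : ℝ) : ℂ)) :=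
    ((integrable_indicator_iff measurableSet_Ioi).2 hi).ofReal
  have i2 : Integrable (fun t : ℝ => (((Ioi (0:ℝ)).indicator E (-t) : ℝ) : ℂ)) := i1.comp_neg
  have iA := i1.integrable_convolution (ContinuousLinearMap.mul ℂ ℂ) i2
  have hA : (fun t : ℝ => (((Ioi (0:ℝ)).indicator E t : ℝ) : ℂ)) ⋆[ContinuousLinearMap.mul ℂ ℂ]
      (fun t : ℝ => (((Ioi (0:ℝ)).indicator E (-t) : ℝ) : ℂ)) = fun x => (autoc E |x| : ℂ) :=
    funext fun x => autoc_conv hi x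
  have e := integral_convolution (ContinuousLinearMap.mul ℂ ℂ) i1 i2 (μ := volume) (ν := volume)
  rw [hA] at iA e
  have e1 : ∫ t : ℝ, (((Ioi (0:ℝ)).indicator E t : ℝ) : ℂ) = 1 := by
    rw [integral_complex_ofReal, integral_indicator measurableSet_Ioi, E1_int_one hα hα1 h]; simp
  have e2 : ∫ t : ℝ, (((Ioi (0:ℝ)).indicator E (-t) : ℝ) : ℂ) = 1 := by
    rw [← e1]; exact integral_neg_eq_self (fun t : ℝ => (((Ioi (0:ℝ)).indicator E t : ℝ) : ℂ)) volume
  rw [e1, e2, integral_complex_ofReal] at e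
  refine ⟨by simpa using iA.re, ?_⟩
  simp at e
  exact_mod_cast e

/-- primitive of `E₁` -/
def G1 (E : ℝ → ℝ) (t : ℝ) : ℝ := ∫ s in (0:ℝ)..t, E s
def H1 (E : ℝ → ℝ) (t : ℝ) : ℝ := ∫ s in (0:ℝ)..t, E s ^ 2

lemma prim_facts {f : ℝ → ℝ} (hf : IntegrableOn f (Ioi 0)) (h0 : ∀ t > 0, 0 ≤ f t) :
    MonotoneOn (fun t => ∫ s in (0:ℝ)..t, f s) (Ici 0) ∧
    (∀ t ≥ 0, 0 ≤ ∫ s in (0:ℝ)..t, f s) ∧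
    (∀ t ≥ 0, ∫ s in (0:ℝ)..t, f s ≤ ∫ s in Ioi (0:ℝ), f s) ∧
    Tendsto (fun t => ∫ s in (0:ℝ)..t, f s) atTop (𝓝 (∫ s in Ioi (0:ℝ), f s)) := by
  have hae : ∀ s : Set ℝ, MeasurableSet s → s ⊆ Ioi 0 → 0 ≤ᵐ[volume.restrict s] f := by
    intro s hs h
    exact (ae_restrict_iff' hs).2 (ae_of_all _ fun t ht => h0 t (h ht))
  refine ⟨fun s hs t ht hst => ?_, fun t ht => ?_, fun t ht => ?_, ?_⟩
  · simp only
    rw [intervalIntegral.integral_of_le hs, intervalIntegral.integral_of_le ht]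
    exact setIntegral_mono_set (hf.mono_set Ioc_subset_Ioi_self) (hae _ measurableSet_Ioc Ioc_subset_Ioi_self)
      (Ioc_subset_Ioc_right hst).eventuallyLE
  · rw [intervalIntegral.integral_of_le ht]
    exact setIntegral_nonneg measurableSet_Ioc fun s hs => h0 s hs.1
  · rw [intervalIntegral.integral_of_le ht]
    exact setIntegral_mono_set hf (hae _ measurableSet_Ioi subset_rfl) Ioc_subset_Ioi_self.eventuallyLE
  · exact intervalIntegral_tendsto_integral_Ioi 0 hf tendsto_id

lemma int_scale {f g : ℝ → ℝ} {κ μ : ℝ} (hμ : 0 < μ) (h : ∀ t > 0, g t = κ * f (μ * t)) {t : ℝ}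
    (ht : 0 ≤ t) : ∫ s in (0:ℝ)..t, g s = κ / μ * ∫ s in (0:ℝ)..(μ * t), f s := by
  have : ∫ s in (0:ℝ)..t, g s = ∫ s in (0:ℝ)..t, κ * f (μ * s) := by
    rw [intervalIntegral.integral_of_le ht, intervalIntegral.integral_of_le ht]
    exact setIntegral_congr_fun measurableSet_Ioc fun s hs => h s hs.1
  rw [this, intervalIntegral.integral_const_mul, intervalIntegral.integral_comp_mul_left _ hμ.ne']
  simp; ring

lemma mean_eq {β : ℝ} {EE : ℝ → ℝ → ℝ}
    (hE : ∀ β < (0:ℝ), SolvesResolventEq (fractionalKernel α) β (EE β)) (hα : 1/2 < α) (hβ : β < 0) (x₀ b : ℝ) {t : ℝ}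
    (ht : 0 ≤ t) : meanVOU EE x₀ b β t =
      b / |β| + (1 - G1 (EE (-1)) (|β| ^ (1 / α) * t)) * (x₀ - b / |β|) := by
  have hl : 0 < |β| := abs_pos.2 hβ.ne
  have e := int_scale (g := EE β) (f := EE (-1)) (κ := |β| ^ (1 / α - 1)) (μ := |β| ^ (1 / α))
    (by positivity) (fun t ht => solves_scale hα hβ (hE _ (by norm_num)) (hE β hβ) ht) ht
  unfold meanVOU G1
  rw [e]
  have : |β| ^ (1 / α - 1) / |β| ^ (1 / α) = |β|⁻¹ := by
    rw [← Real.rpow_sub hl, ← Real.rpow_neg_one]; congr 1; ring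
  rw [this]
  have hb : β = -|β| := by rw [abs_of_neg hβ]; ring
  nth_rewrite 1 [hb]
  field_simp
  ring

lemma cov_eq {β : ℝ} {EE : ℝ → ℝ → ℝ}
    (hE : ∀ β < (0:ℝ), SolvesResolventEq (fractionalKernel α) β (EE β)) (hα : 1/2 < α) (hβ : β < 0) (σ : ℝ) {s t : ℝ} (hs : 0 ≤ s) (ht : 0 ≤ t) :
    covVOU EE σ β s t = σ ^ 2 * (|β| ^ (1 / α - 2) * ∫ r in (0:ℝ)..(|β| ^ (1 / α) * min s t),
      EE (-1) (|β| ^ (1 / α) * |t - s| + r) * EE (-1) r) := by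
  have hl : 0 < |β| := abs_pos.2 hβ.ne
  unfold covVOU
  have e := int_scale (g := fun r => EE β (|t - s| + r) * EE β r)
    (f := fun r => EE (-1) (|β| ^ (1 / α) * |t - s| + r) * EE (-1) r)
    (κ := |β| ^ (1 / α - 1) * |β| ^ (1 / α - 1)) (μ := |β| ^ (1 / α))
    (by positivity) (fun r hr => ?_) (le_min hs ht)
  · rw [e]
    congr 2
    rw [← Real.rpow_add hl, ← Real.rpow_sub hl]; congr 1; ring
  · have := hE (-1) (by norm_num)
    rw [solves_scale hα hβ this (hE β hβ) hr,
      solves_scale hα hβ this (hE β hβ) (by positivity : 0 < |t - s| + r), mul_add]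
    ring

lemma cov_diag {β : ℝ} {EE : ℝ → ℝ → ℝ}
    (hE : ∀ β < (0:ℝ), SolvesResolventEq (fractionalKernel α) β (EE β)) (hα : 1/2 < α) (hβ : β < 0) (σ : ℝ) {t : ℝ} (ht : 0 ≤ t) :
    covVOU EE σ β t t = σ ^ 2 * (|β| ^ (1 / α - 2) * H1 (EE (-1)) (|β| ^ (1 / α) * t)) := by
  rw [cov_eq hE hα hβ σ ht ht]
  unfold H1
  simp [pow_two]

lemma cov_symm {β : ℝ} {EE : ℝ → ℝ → ℝ} (σ : ℝ) (s t : ℝ) : covVOU EE σ β s t = covVOU EE σ β t s := by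
  unfold covVOU; rw [min_comm, abs_sub_comm]

lemma KE_autoc_int {EE : ℝ → ℝ → ℝ}
    (hE : ∀ β < (0:ℝ), SolvesResolventEq (fractionalKernel α) β (EE β)) (hα : 1/2 < α) (hα1 : α < 1) {y : ℝ} (hy : 0 ≤ y) :
    IntegrableOn (fun r => EE (-1) (y + r) * EE (-1) r) (Ioi 0) := by
  have h := hE (-1) (by norm_num)
  have hα0 : 0 < α := by linarith
  have hc := E1_cont hα hα1 h
  have hm : ContinuousOn (fun r => EE (-1) (y + r) * EE (-1) r) (Ioi 0) :=
      (hc.comp (by fun_prop) (fun r (hr : 0 < r) => by show 0 < y + r; linarith)).mul hc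
  refine Integrable.mono' (E1_KE_integrable hα hα1 h) (hm.aestronglyMeasurable measurableSet_Ioi) ?_
  refine (ae_restrict_iff' measurableSet_Ioi).2 (ae_of_all _ fun t (ht : 0 < t) => ?_)
  have hp : 0 < y + t := by positivity
  rw [norm_mul, Real.norm_of_nonneg (E1_pos hα hα1 h hp).le, Real.norm_of_nonneg (E1_pos hα hα1 h ht).le]
  refine mul_le_mul_of_nonneg_right ?_ (E1_pos hα hα1 h ht).le
  exact (E1_le hα hα1 h hp).trans (fk_anti hα0 hα1 ht (by linarith))

lemma cov_bounds {β : ℝ} {EE : ℝ → ℝ → ℝ}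
    (hE : ∀ β < (0:ℝ), SolvesResolventEq (fractionalKernel α) β (EE β)) (hα : 1/2 < α) (hα1 : α < 1) (hβ : β < 0) (σ : ℝ) {s t : ℝ} (hs : 0 ≤ s) (ht : 0 ≤ t) :
    0 ≤ covVOU EE σ β s t ∧ covVOU EE σ β s t ≤
      σ ^ 2 * (|β| ^ (1 / α - 2) * autoc (EE (-1)) |(|β| ^ (1 / α) * (t - s))|) := by
  have h := hE (-1) (by norm_num)
  have hl : 0 < |β| := abs_pos.2 hβ.ne
  have hy : 0 ≤ |β| ^ (1 / α) * |t - s| := by positivity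
  have hmin : 0 ≤ |β| ^ (1 / α) * min s t := mul_nonneg (by positivity) (le_min hs ht)
  have pf := prim_facts (KE_autoc_int hE hα hα1 hy) (fun r hr => mul_nonneg
    (E1_pos hα hα1 h (by positivity)).le (E1_pos hα hα1 h hr).le)
  rw [cov_eq hE hα hβ σ hs ht, abs_mul, abs_of_pos (by positivity : 0 < |β| ^ (1 / α))]
  constructor
  · have := pf.2.1 _ hmin
    positivity
  · have := pf.2.2.1 _ hmin
    unfold autoc
    gcongr

lemma kern_int {β : ℝ} {EE : ℝ → ℝ → ℝ}
    (hE : ∀ β < (0:ℝ), SolvesResolventEq (fractionalKernel α) β (EE β)) (hα : 1/2 < α) (hα1 : α < 1) (hβ : β < 0) (σ : ℝ) :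
    Integrable (fun x => σ ^ 2 * (|β| ^ (1 / α - 2) * autoc (EE (-1)) |(|β| ^ (1 / α) * x)|)) ∧
    ∫ x, σ ^ 2 * (|β| ^ (1 / α - 2) * autoc (EE (-1)) |(|β| ^ (1 / α) * x)|) = σ ^ 2 / |β| ^ 2 := by
  have h := autoc_int hα hα1 (hE (-1) (by norm_num))
  have hl : 0 < |β| := abs_pos.2 hβ.ne
  have hμ : 0 < |β| ^ (1 / α) := by positivity
  refine ⟨((h.1.comp_mul_left' hμ.ne').const_mul _).const_mul _, ?_⟩
  rw [integral_const_mul, integral_const_mul, Measure.integral_comp_mul_left (fun x => autoc (EE (-1)) |x|),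
    h.2, abs_of_pos (inv_pos.2 hμ), smul_eq_mul, mul_one, ← div_eq_mul_inv, ← Real.rpow_sub hl,
    show 1 / α - 2 - 1 / α = -(2:ℝ) by ring, Real.rpow_neg hl.le]
  norm_cast

lemma kern_cont {β : ℝ} {EE : ℝ → ℝ → ℝ}
    (hE : ∀ β < (0:ℝ), SolvesResolventEq (fractionalKernel α) β (EE β)) (hα : 1/2 < α) (hα1 : α < 1) (σ : ℝ) :
    Continuous (fun x => σ ^ 2 * (|β| ^ (1 / α - 2) * autoc (EE (-1)) |(|β| ^ (1 / α) * x)|)) := by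
  have := (autoc_cont hα hα1 (hE (-1) (by norm_num))).comp (continuous_const_mul (|β| ^ (1 / α)))
  exact (this.const_mul _).const_mul _

end

section
open MeasureTheory Set Filter
open scoped ENNReal NNReal Topology


open ProbabilityTheory in
lemma gauss_fourth (v : ℝ≥0) : ∫ x, x ^ 4 ∂(gaussianReal 0 v) = 3 * (v:ℝ) ^ 2 := by
  have h1 : ∫ x, x ^ 4 ∂(gaussianReal 0 v) = iteratedDeriv 4 (mgf (fun x ↦ x) (gaussianReal 0 v)) 0 := by
    rw [iteratedDeriv_mgf_zero] <;> simp
  rw [h1, mgf_fun_id_gaussianReal]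
  simp only [zero_mul, zero_add]
  set w : ℝ := (v : ℝ)
  have hd : ∀ t : ℝ, HasDerivAt (fun t => Real.exp (w * t ^ 2 / 2)) (w * t * Real.exp (w * t ^ 2 / 2)) t := by
    intro t
    have h2 : HasDerivAt (fun t : ℝ => w * t ^ 2 / 2) (w * t) t := by
      have := (((hasDerivAt_id t).pow 2).const_mul w).div_const 2
      refine this.congr_deriv ?_
      simp; ring
    exact h2.exp.congr_deriv (by ring)
  have d1 : deriv (fun t => Real.exp (w * t ^ 2 / 2)) = fun t => w * t * Real.exp (w * t ^ 2 / 2) :=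
    funext fun t => (hd t).deriv
  have d2 : deriv (fun t => w * t * Real.exp (w * t ^ 2 / 2)) =
      fun t => (w + w ^ 2 * t ^ 2) * Real.exp (w * t ^ 2 / 2) := by
    funext t
    have h2 : HasDerivAt (fun t : ℝ => w * t) w t := by
      simpa using (hasDerivAt_id t).const_mul w
    refine (h2.mul (hd t)).deriv.trans ?_
    ring
  have d3 : deriv (fun t => (w + w ^ 2 * t ^ 2) * Real.exp (w * t ^ 2 / 2)) =
      fun t => (3 * w ^ 2 * t + w ^ 3 * t ^ 3) * Real.exp (w * t ^ 2 / 2) := by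
    funext t
    have h2 : HasDerivAt (fun t : ℝ => w + w ^ 2 * t ^ 2) (w ^ 2 * (2 * t)) t := by
      have := (((hasDerivAt_id t).pow 2).const_mul (w ^ 2)).const_add w
      exact this.congr_deriv (by simp)
    refine (h2.mul (hd t)).deriv.trans ?_
    ring
  have d4 : deriv (fun t => (3 * w ^ 2 * t + w ^ 3 * t ^ 3) * Real.exp (w * t ^ 2 / 2)) 0 = 3 * w ^ 2 := by
    have h2 : HasDerivAt (fun t : ℝ => 3 * w ^ 2 * t + w ^ 3 * t ^ 3) (3 * w ^ 2) 0 := by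
      have := ((hasDerivAt_id (0:ℝ)).const_mul (3 * w ^ 2)).add
        (((hasDerivAt_id (0:ℝ)).pow 3).const_mul (w ^ 3))
      exact this.congr_deriv (by simp)
    refine (h2.mul (hd 0)).deriv.trans ?_
    simp
  rw [iteratedDeriv_succ, iteratedDeriv_succ, iteratedDeriv_succ, iteratedDeriv_succ, iteratedDeriv_zero,
    d1, d2, d3, d4]

open ProbabilityTheory in
lemma gauss_moments {Ω : Type*} [MeasurableSpace Ω] {P : Measure Ω} {W : Ω → ℝ} (hW : Measurable W)
    {v : ℝ} (h : Measure.map W P = gaussianReal 0 (Real.toNNReal v)) :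
    MemLp W 4 P ∧ ∫ ω, W ω ∂P = 0 ∧ ∫ ω, W ω ^ 2 ∂P = max v 0 ∧ ∫ ω, W ω ^ 4 ∂P = 3 * (max v 0) ^ 2 := by
  refine ⟨?_, ?_, ?_, ?_⟩
  · have := memLp_id_gaussianReal' (μ := 0) (v := Real.toNNReal v) 4 (by norm_num)
    rw [← h] at this
    exact (memLp_map_measure_iff this.1 hW.aemeasurable).1 this
  · have : ∫ ω, W ω ∂P = ∫ x, x ∂(Measure.map W P) := by
      rw [integral_map hW.aemeasurable (by fun_prop)]
    rw [this, h, integral_id_gaussianReal]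
  · have : ∫ ω, W ω ^ 2 ∂P = ∫ x, x ^ 2 ∂(Measure.map W P) := by
      rw [integral_map hW.aemeasurable (by fun_prop)]
    rw [this, h]
    have h2 := variance_fun_id_gaussianReal (μ := 0) (v := Real.toNNReal v)
    rw [variance_eq_integral measurable_id'.aemeasurable] at h2
    simpa [integral_id_gaussianReal] using h2
  · have : ∫ ω, W ω ^ 4 ∂P = ∫ x, x ^ 4 ∂(Measure.map W P) := by
      rw [integral_map hW.aemeasurable (by fun_prop)]
    rw [this, h, gauss_fourth]; simp

section
variable {Ω : Type*} [MeasurableSpace Ω] {P : Measure Ω}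

/-- integrable with given integral -/
def HInt (P : Measure Ω) (f : Ω → ℝ) (a : ℝ) : Prop := Integrable f P ∧ ∫ ω, f ω ∂P = a

lemma HInt.add {f g : Ω → ℝ} {a b : ℝ} (hf : HInt P f a) (hg : HInt P g b) :
    HInt P (fun ω => f ω + g ω) (a + b) :=
  ⟨hf.1.add hg.1, by rw [integral_add hf.1 hg.1, hf.2, hg.2]⟩

lemma HInt.sub {f g : Ω → ℝ} {a b : ℝ} (hf : HInt P f a) (hg : HInt P g b) :
    HInt P (fun ω => f ω - g ω) (a - b) :=
  ⟨hf.1.sub hg.1, by rw [integral_sub hf.1 hg.1, hf.2, hg.2]⟩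

lemma HInt.cmul {f : Ω → ℝ} {a : ℝ} (k : ℝ) (hf : HInt P f a) :
    HInt P (fun ω => k * f ω) (k * a) :=
  ⟨hf.1.const_mul k, by rw [integral_const_mul, hf.2]⟩

lemma HInt.congr {f g : Ω → ℝ} {a b : ℝ} (hf : HInt P f a) (h : ∀ ω, f ω = g ω) (hab : a = b) :
    HInt P g b := by
  rw [← funext h, ← hab]; exact hf

lemma HInt.const [IsProbabilityMeasure P] (k : ℝ) : HInt P (fun _ => k) k :=
  ⟨integrable_const k, by simp⟩

end

section
variable {Ω : Type*} [MeasurableSpace Ω] {P : Measure Ω} [IsProbabilityMeasure P]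
  {X : ℝ → Ω → ℝ} {m : ℝ → ℝ} {c : ℝ → ℝ → ℝ}

lemma gp_combo (h : IsGaussianProcessOn P (Ici 0) X m c) {s t : ℝ} (hs : 0 ≤ s) (ht : 0 ≤ t) (a b : ℝ) :
    Measure.map (fun ω => a * (X s ω - m s) + b * (X t ω - m t)) P =
      ProbabilityTheory.gaussianReal 0
        (Real.toNNReal (a * a * c s s + a * b * c s t + (b * a * c t s + b * b * c t t))) := by
  have h1 := h.2 2 ![s, t] ![a, b] (by intro i; fin_cases i <;> simpa)
  simp only [Fin.sum_univ_two, Matrix.cons_val_zero, Matrix.cons_val_one] at h1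
  have hm : Measurable (fun ω => a * X s ω + b * X t ω) :=
    ((h.1 s).const_mul _).add ((h.1 t).const_mul _)
  have h2 := ProbabilityTheory.gaussianReal_map_sub_const (μ := a * m s + b * m t)
    (v := Real.toNNReal (a * a * c s s + a * b * c s t + (b * a * c t s + b * b * c t t)))
    (a * m s + b * m t)
  rw [← h1, Measure.map_map (by fun_prop) hm, sub_self] at h2
  rw [← h2]
  congr 1; ext ω; simp only [Function.comp]; ring

lemma memLp4_int {W : Ω → ℝ} (hW : MemLp W 4 P) :
    Integrable (fun ω => W ω ^ 4) P ∧ Integrable (fun ω => W ω ^ 2) P := by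
  constructor
  · have := hW.integrable_norm_pow (p := 4) (by norm_num)
    refine this.congr (ae_of_all _ fun ω => ?_)
    simp only [Real.norm_eq_abs]
    rw [show (4:ℕ) = 2 * 2 by norm_num, pow_mul, pow_mul, sq_abs]
  · exact (hW.mono_exponent (p := 2) (by norm_num)).integrable_sq

lemma gp_lin (h : IsGaussianProcessOn P (Ici 0) X m c) {s t : ℝ} (hs : 0 ≤ s) (ht : 0 ≤ t) (a b : ℝ)
    {v : ℝ} (hv : v = max (a * a * c s s + a * b * c s t + (b * a * c t s + b * b * c t t)) 0) :
    MemLp (fun ω => a * (X s ω - m s) + b * (X t ω - m t)) 4 P ∧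
    HInt P (fun ω => (a * (X s ω - m s) + b * (X t ω - m t)) ^ 2) v ∧
    HInt P (fun ω => (a * (X s ω - m s) + b * (X t ω - m t)) ^ 4) (3 * v ^ 2) := by
  have hm : Measurable (fun ω => a * (X s ω - m s) + b * (X t ω - m t)) := by
    have := h.1 s
    have := h.1 t
    fun_prop
  obtain ⟨l, _, e2, e4⟩ := gauss_moments hm (gp_combo h hs ht a b)
  rw [← hv] at e2 e4
  exact ⟨l, ⟨(memLp4_int l).2, e2⟩, ⟨(memLp4_int l).1, e4⟩⟩

lemma gp_one (h : IsGaussianProcessOn P (Ici 0) X m c) (hc : ∀ s t, 0 ≤ s → 0 ≤ t → 0 ≤ c s t)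
    {t : ℝ} (ht : 0 ≤ t) :
    MemLp (fun ω => X t ω - m t) 4 P ∧ HInt P (fun ω => (X t ω - m t) ^ 2) (c t t) ∧
    HInt P (fun ω => (X t ω - m t) ^ 4) (3 * c t t ^ 2) := by
  have := gp_lin h ht ht 1 0 (v := c t t) (by simp [hc t t ht ht])
  simpa using this

lemma gp_prod (h : IsGaussianProcessOn P (Ici 0) X m c) (hc : ∀ s t, 0 ≤ s → 0 ≤ t → 0 ≤ c s t)
    (hsym : ∀ s t, c s t = c t s) {s t : ℝ} (hs : 0 ≤ s) (ht : 0 ≤ t) :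
    HInt P (fun ω => (X s ω - m s) * (X t ω - m t)) (c s t) ∧
    HInt P (fun ω => ((X s ω - m s) ^ 2 - c s s) * ((X t ω - m t) ^ 2 - c t t)) (2 * c s t ^ 2) := by
  obtain ⟨-, s2, s4⟩ := gp_one h hc hs
  obtain ⟨-, t2, t4⟩ := gp_one h hc ht
  obtain ⟨-, p2, p4⟩ := gp_lin h hs ht 1 1 (v := c s s + 2 * c s t + c t t) (by
    rw [← hsym s t, max_eq_left]
    · ring
    · have := hc s s hs hs; have := hc s t hs ht; have := hc t t ht ht; linarith)
  have e1 : HInt P (fun ω => (X s ω - m s) * (X t ω - m t)) (c s t) :=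
    (((p2.sub s2).sub t2).cmul (1/2)).congr (fun ω => by ring) (by ring)
  have hn : 0 ≤ c s s + c t t - 2 * c s t := by
    have e : HInt P (fun ω => ((X s ω - m s) - (X t ω - m t)) ^ 2) (c s s + c t t - 2 * c s t) :=
      ((s2.add t2).sub (e1.cmul 2)).congr (fun ω => by ring) rfl
    rw [← e.2]; exact integral_nonneg fun ω => sq_nonneg _
  obtain ⟨-, n2, n4⟩ := gp_lin h hs ht 1 (-1) (v := c s s - 2 * c s t + c t t) (by
    rw [← hsym s t, max_eq_left]
    · ring
    · linarith)
  refine ⟨e1, ?_⟩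
  exact ((((((p4.add n4).sub (s4.cmul 2)).sub (t4.cmul 2)).cmul (1/12)).sub (s2.cmul (c t t))).sub
    (t2.cmul (c s s)) |>.add (HInt.const (c s s * c t t))).congr (fun ω => by ring) (by ring)

end

end

section
open MeasureTheory Set Filter
open scoped ENNReal NNReal Topology


section
variable {Ω : Type*} [MeasurableSpace Ω] {P : Measure Ω} [IsProbabilityMeasure P]
  {Z : ℝ → Ω → ℝ}

lemma path_int (hm : Measurable (Function.uncurry Z)) {M : ℝ}
    (h2 : ∀ t ≥ 0, Integrable (fun ω => Z t ω ^ 2) P ∧ ∫ ω, Z t ω ^ 2 ∂P ≤ M) :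
    ∀ᵐ ω ∂P, ∀ T ≥ (0:ℝ), IntervalIntegrable (fun t => Z t ω ^ 2) volume 0 T ∧
      IntervalIntegrable (fun t => Z t ω) volume 0 T := by
  have key : ∀ n : ℕ, ∀ᵐ ω ∂P, Integrable (fun t => Z t ω ^ 2) (volume.restrict (Ioc (0:ℝ) n)) := by
    intro n
    have hmm : AEStronglyMeasurable (fun p : ℝ × Ω => Z p.1 p.2 ^ 2)
        ((volume.restrict (Ioc (0:ℝ) n)).prod P) := (hm.pow_const 2).aestronglyMeasurable
    have : Integrable (fun p : ℝ × Ω => Z p.1 p.2 ^ 2) ((volume.restrict (Ioc (0:ℝ) n)).prod P) := by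
      rw [integrable_prod_iff hmm]
      constructor
      · exact (ae_restrict_iff' measurableSet_Ioc).2 (ae_of_all _ fun t ht => (h2 t ht.1.le).1)
      · refine Integrable.mono' (integrable_const M) hmm.norm.integral_prod_right' ?_
        refine (ae_restrict_iff' measurableSet_Ioc).2 (ae_of_all _ fun t ht => ?_)
        rw [Real.norm_of_nonneg (integral_nonneg fun _ => norm_nonneg _)]
        refine le_trans (le_of_eq ?_) (h2 t ht.1.le).2
        congr 1; ext ω; simp
    exact this.prod_left_ae
  filter_upwards [ae_all_iff.2 key] with ω hω T hT
  obtain ⟨n, hn⟩ := exists_nat_ge T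
  have h1 : IntegrableOn (fun t => Z t ω ^ 2) (Ioc 0 T) :=
    IntegrableOn.mono_set (hω n) (Ioc_subset_Ioc_right hn)
  rw [intervalIntegrable_iff_integrableOn_Ioc_of_le hT, intervalIntegrable_iff_integrableOn_Ioc_of_le hT]
  refine ⟨h1, ?_⟩
  have hms : AEStronglyMeasurable (fun t => Z t ω) (volume.restrict (Ioc 0 T)) :=
    (hm.comp (measurable_prodMk_right (y := ω))).aestronglyMeasurable
  exact ((memLp_two_iff_integrable_sq hms).2 h1).integrable (by norm_num)

lemma var_bound (hm : Measurable (Function.uncurry Z)) {k : ℝ → ℝ} (hkc : Continuous k)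
    (hki : Integrable k) (hk0 : ∀ x, 0 ≤ k x) {M : ℝ}
    (h2 : ∀ t ≥ 0, Integrable (fun ω => Z t ω ^ 2) P ∧ ∫ ω, Z t ω ^ 2 ∂P ≤ M)
    (hk : ∀ s t, 0 ≤ s → 0 ≤ t → ∫ ω, Z s ω * Z t ω ∂P ≤ k (t - s)) {T : ℝ} (hT : 0 ≤ T) :
    Integrable (fun ω => (∫ t in (0:ℝ)..T, Z t ω) ^ 2) P ∧
    ∫ ω, (∫ t in (0:ℝ)..T, Z t ω) ^ 2 ∂P ≤ T * ∫ x, k x := by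
  set ρ := (volume : Measure ℝ).restrict (Ioc 0 T) with hρ
  have hmt : ∀ t, AEStronglyMeasurable (Z t) P := fun t =>
    (hm.comp (measurable_prodMk_left (x := t))).aestronglyMeasurable
  have hL : ∀ t ≥ 0, MemLp (Z t) 2 P := fun t ht => (memLp_two_iff_integrable_sq (hmt t)).2 (h2 t ht).1
  have hae : ∀ {p : ℝ × ℝ → Prop}, (∀ s t, 0 < s → 0 < t → p (s, t)) → ∀ᵐ q ∂(ρ.prod ρ), p q := by
    intro p hp
    rw [hρ, Measure.prod_restrict]
    exact (ae_restrict_iff' (measurableSet_Ioc.prod measurableSet_Ioc)).2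
      (ae_of_all _ fun q hq => hp q.1 q.2 hq.1.1 hq.2.1)
  have hmm : AEStronglyMeasurable (fun q : (ℝ × ℝ) × Ω => Z q.1.1 q.2 * Z q.1.2 q.2)
      ((ρ.prod ρ).prod P) := by
    refine Measurable.aestronglyMeasurable ?_
    exact (hm.comp (by fun_prop : Measurable fun q : (ℝ × ℝ) × Ω => (q.1.1, q.2))).mul
      (hm.comp (by fun_prop : Measurable fun q : (ℝ × ℝ) × Ω => (q.1.2, q.2)))
  have hprod : ∀ s t, 0 ≤ s → 0 ≤ t → Integrable (fun ω => Z s ω * Z t ω) P :=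
    fun s t hs ht => (hL s hs).integrable_mul (hL t ht)
  have hI : Integrable (fun q : (ℝ × ℝ) × Ω => Z q.1.1 q.2 * Z q.1.2 q.2) ((ρ.prod ρ).prod P) := by
    rw [integrable_prod_iff hmm]
    constructor
    · exact hae fun s t hs ht => hprod s t hs.le ht.le
    · refine Integrable.mono' (integrable_const M) hmm.norm.integral_prod_right' ?_
      refine hae fun s t hs ht => ?_
      rw [Real.norm_of_nonneg (integral_nonneg fun _ => norm_nonneg _)]
      have e : ∫ ω, (1/2) * (Z s ω ^ 2 + Z t ω ^ 2) ∂P ≤ M := by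
        rw [integral_const_mul, integral_add (h2 s hs.le).1 (h2 t ht.le).1]
        linarith [(h2 s hs.le).2, (h2 t ht.le).2]
      refine le_trans (integral_mono (hprod s t hs.le ht.le).norm
        (((h2 s hs.le).1.add (h2 t ht.le).1).const_mul _) fun ω => ?_) e
      simp only [norm_mul, Real.norm_eq_abs, Pi.add_apply]
      nlinarith [sq_nonneg (|Z s ω| - |Z t ω|), sq_abs (Z s ω), sq_abs (Z t ω)]
  have hsq : ∀ ω, (∫ t in (0:ℝ)..T, Z t ω) ^ 2 = ∫ q, Z q.1 ω * Z q.2 ω ∂(ρ.prod ρ) := by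
    intro ω
    rw [intervalIntegral.integral_of_le hT, pow_two]
    exact (integral_prod_mul (μ := ρ) (ν := ρ) (fun s => Z s ω) (fun t => Z t ω)).symm
  simp_rw [hsq]
  refine ⟨hI.integral_prod_right, ?_⟩
  rw [← integral_integral_swap (μ := ρ.prod ρ) (ν := P) (f := fun (q : ℝ × ℝ) ω => Z q.1 ω * Z q.2 ω) hI]
  have hkm : Integrable (fun q : ℝ × ℝ => k (q.2 - q.1)) (ρ.prod ρ) := by
    have hmk : AEStronglyMeasurable (fun q : ℝ × ℝ => k (q.2 - q.1)) (ρ.prod ρ) :=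
      (by fun_prop : Continuous _).aestronglyMeasurable
    rw [integrable_prod_iff hmk]
    constructor
    · exact ae_of_all _ fun s => (hki.comp_sub_right s).mono_measure Measure.restrict_le_self
    · refine Integrable.mono' (integrable_const (∫ x, k x)) hmk.norm.integral_prod_right' ?_
      refine ae_of_all _ fun s => ?_
      rw [Real.norm_of_nonneg (integral_nonneg fun _ => norm_nonneg _)]
      rw [← integral_sub_right_eq_self k s]
      have : (fun y => ‖k (y - s)‖) = fun y => k (y - s) := by
        ext y; exact Real.norm_of_nonneg (hk0 _)
      simp only [this]
      exact setIntegral_le_integral (hki.comp_sub_right s) (ae_of_all _ fun x => hk0 _)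
  refine le_trans (integral_mono_ae hI.integral_prod_left hkm
    (hae fun s t hs ht => hk s t hs.le ht.le)) ?_
  rw [integral_prod _ hkm]
  have : ∫ s, (∫ t, k (t - s) ∂ρ) ∂ρ ≤ ∫ s, (∫ x, k x) ∂ρ := by
    refine integral_mono hkm.integral_prod_left (integrable_const _) fun s => ?_
    simp only
    rw [← integral_sub_right_eq_self k s]
    exact setIntegral_le_integral (hki.comp_sub_right s) (ae_of_all _ fun x => hk0 _)
  refine this.trans ?_
  rw [integral_const]
  simp [hρ, hT, measureReal_def]

end

end

section
open MeasureTheory Set Filter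
open scoped ENNReal NNReal Topology


section
variable {Ω : Type*} [MeasurableSpace Ω] {P : Measure Ω} [IsProbabilityMeasure P]

lemma cheb {D W : Ω → ℝ} {V ε : ℝ} (hW : Integrable W P) (hV : ∫ ω, W ω ∂P ≤ V)
    (h : ∀ᵐ ω ∂P, D ω ^ 2 ≤ W ω) (hε : 0 < ε) :
    P {ω | ε ≤ |D ω|} ≤ ENNReal.ofReal (V / ε ^ 2) := by
  have h0 : 0 ≤ᵐ[P] W := by
    filter_upwards [h] with ω hω
    exact (sq_nonneg _).trans hω
  have h1 := mul_meas_ge_le_integral_of_nonneg h0 hW (ε ^ 2)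
  have h2 : P {ω | ε ≤ |D ω|} ≤ P {ω | ε ^ 2 ≤ W ω} := by
    refine measure_mono_ae ?_
    filter_upwards [h] with ω hω (hh : ε ≤ |D ω|)
    show ε ^ 2 ≤ W ω
    rw [← sq_abs] at hω
    exact (pow_le_pow_left₀ hε.le hh 2).trans hω
  refine h2.trans ?_
  rw [← ofReal_measureReal (measure_ne_top _ _)]
  refine ENNReal.ofReal_le_ofReal ?_
  rw [le_div_iff₀ (by positivity), mul_comm]
  exact h1.trans hV

variable {X : ℝ → Ω → ℝ} {m : ℝ → ℝ} {c : ℝ → ℝ → ℝ}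

lemma ii_congr_max {f : ℝ → ℝ} {T : ℝ} (hT : 0 ≤ T) :
    ∫ t in (0:ℝ)..T, f (max t 0) = ∫ t in (0:ℝ)..T, f t := by
  rw [intervalIntegral.integral_of_le hT, intervalIntegral.integral_of_le hT]
  refine setIntegral_congr_fun measurableSet_Ioc fun t ht => ?_
  simp only [max_eq_left ht.1.le]

lemma ii_bdd {f : ℝ → ℝ} {M : ℝ} (hf : Measurable f) (hM : ∀ t, |f t| ≤ M) (T : ℝ) :
    IntervalIntegrable f volume 0 T := by
  have : IntervalIntegrable (fun _ : ℝ => M) volume 0 T := intervalIntegrable_const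
  exact this.mono_fun' hf.aestronglyMeasurable (ae_of_all _ fun t => hM t)

lemma dev_bound (hXm : Measurable (Function.uncurry X)) (h : IsGaussianProcessOn P (Ici 0) X m c)
    (hc : ∀ s t, 0 ≤ s → 0 ≤ t → 0 ≤ c s t) (hsym : ∀ s t, c s t = c t s)
    {k : ℝ → ℝ} (hkc : Continuous k) (hki : Integrable k) (hk0 : ∀ x, 0 ≤ k x)
    (hk : ∀ s t, 0 ≤ s → 0 ≤ t → c s t ≤ k (t - s)) {S M : ℝ} (hS : ∀ t ≥ 0, c t t ≤ S)
    (hM : ∀ t ≥ 0, |m t| ≤ M) (mm : Measurable fun t => m (max t 0))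
    (mv : Measurable fun t => c (max t 0) (max t 0)) :
    (∀ᵐ ω ∂P, ∀ T ≥ (0:ℝ), IntervalIntegrable (fun t => X t ω ^ 2) volume 0 T ∧
      IntervalIntegrable (fun t => X t ω) volume 0 T) ∧
    (∀ T ≥ (0:ℝ), ∀ ε > (0:ℝ),
      P {ω | ε ≤ |(∫ t in (0:ℝ)..T, X t ω) - ∫ t in (0:ℝ)..T, m t|} ≤
        ENNReal.ofReal (T * (∫ x, k x) / ε ^ 2)) ∧
    (∀ T ≥ (0:ℝ), ∀ ε > (0:ℝ),
      P {ω | ε ≤ |(∫ t in (0:ℝ)..T, X t ω ^ 2) - ∫ t in (0:ℝ)..T, (m t ^ 2 + c t t)|} ≤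
        ENNReal.ofReal (T * ((4 * S + 8 * M ^ 2) * ∫ x, k x) / ε ^ 2)) := by
  have hS0 : 0 ≤ S := (hc 0 0 le_rfl le_rfl).trans (hS 0 le_rfl)
  have hM0 : 0 ≤ M := (abs_nonneg _).trans (hM 0 le_rfl)
  have hcS : ∀ s t, 0 ≤ s → 0 ≤ t → c s t ≤ S := by
    intro s t hs ht
    have e1 := (gp_prod h hc hsym hs ht).1
    have s2 := (gp_one h hc hs).2.1
    have t2 := (gp_one h hc ht).2.1
    have e : HInt P (fun ω => ((X s ω - m s) - (X t ω - m t)) ^ 2) (c s s + c t t - 2 * c s t) :=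
      ((s2.add t2).sub (e1.cmul 2)).congr (fun ω => by ring) rfl
    have : 0 ≤ c s s + c t t - 2 * c s t := by
      rw [← e.2]; exact integral_nonneg fun ω => sq_nonneg _
    linarith [hS s hs, hS t ht]
  -- the auxiliary processes
  set Y : ℝ → Ω → ℝ := fun t ω => X t ω - m (max t 0) with hY
  set V : ℝ → ℝ := fun t => c (max t 0) (max t 0) with hV
  have hYe : ∀ t ≥ 0, Y t = fun ω => X t ω - m t := by
    intro t ht; simp only [hY, max_eq_left ht]
  have hVe : ∀ t ≥ 0, V t = c t t := by
    intro t ht; simp only [hV, max_eq_left ht]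
  have Ym : Measurable (Function.uncurry Y) := hXm.sub (mm.comp measurable_fst)
  have Z2m : Measurable (Function.uncurry fun t ω => Y t ω ^ 2 - V t) :=
    (Ym.pow_const 2).sub (mv.comp measurable_fst)
  have Z3m : Measurable (Function.uncurry fun t ω => 2 * m (max t 0) * Y t ω) :=
    ((mm.comp measurable_fst).const_mul 2).mul Ym
  have a1 : ∀ t ≥ 0, Integrable (fun ω => Y t ω ^ 2) P ∧ ∫ ω, Y t ω ^ 2 ∂P ≤ S := by
    intro t ht
    rw [hYe t ht]
    have := (gp_one h hc ht).2.1
    exact ⟨this.1, this.2.le.trans (hS t ht)⟩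
  have p1 := path_int Ym a1
  have hpX : ∀ᵐ ω ∂P, ∀ T ≥ (0:ℝ), IntervalIntegrable (fun t => X t ω ^ 2) volume 0 T ∧
      IntervalIntegrable (fun t => X t ω) volume 0 T := by
    refine path_int hXm (M := 2 * S + 2 * M ^ 2) fun t ht => ?_
    obtain ⟨l, h2, -⟩ := gp_one h hc ht
    have l2 : MemLp (fun ω => X t ω) 2 P := by
      have := (l.mono_exponent (p := 2) (by norm_num)).add (memLp_const (m t))
      refine this.ae_eq (ae_of_all _ fun ω => ?_)
      simp
    refine ⟨l2.integrable_sq, ?_⟩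
    have e := ((h2.cmul 2).add (HInt.const (P := P) (2 * m t ^ 2)))
    refine le_trans (integral_mono l2.integrable_sq e.1 fun ω => ?_) (e.2.le.trans ?_)
    · simp only
      nlinarith [sq_nonneg (X t ω - m t - m t)]
    · have := sq_le_sq' (by linarith [abs_le.1 (hM t ht) |>.1]) (abs_le.1 (hM t ht)).2
      linarith [hS t ht]
  have mii : ∀ T, IntervalIntegrable (fun t => m (max t 0)) volume 0 T :=
    ii_bdd mm fun t => hM _ (le_max_right _ _)
  have m2ii : ∀ T, IntervalIntegrable (fun t => m (max t 0) ^ 2) volume 0 T := by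
    refine ii_bdd (M := M ^ 2) (mm.pow_const 2) fun t => ?_
    rw [abs_pow]
    exact pow_le_pow_left₀ (abs_nonneg _) (hM _ (le_max_right _ _)) 2
  have vii : ∀ T, IntervalIntegrable V volume 0 T := by
    refine ii_bdd (M := S) mv fun t => ?_
    rw [abs_of_nonneg (hc _ _ (le_max_right _ _) (le_max_right _ _))]
    exact hS _ (le_max_right _ _)
  refine ⟨hpX, fun T hT ε hε => ?_, fun T hT ε hε => ?_⟩
  · have vb := var_bound Ym hkc hki hk0 a1 (fun s t hs ht => by
      rw [hYe s hs, hYe t ht, (gp_prod h hc hsym hs ht).1.2]; exact hk s t hs ht) hT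
    refine cheb vb.1 vb.2 ?_ hε
    filter_upwards [hpX] with ω hω
    rw [← ii_congr_max (f := m) hT, ← intervalIntegral.integral_sub (hω T hT).2 (mii T)]
  · have vb2 := var_bound Z2m (k := fun x => 2 * S * k x) (M := 2 * S ^ 2) (hkc.const_mul _)
      (hki.const_mul _) (fun x => by have := hk0 x; positivity) (fun t ht => by
        rw [hYe t ht, hVe t ht]
        have e := (gp_prod h hc hsym ht ht).2
        have e' := e.congr (g := fun ω => ((X t ω - m t) ^ 2 - c t t) ^ 2) (fun ω => by ring) rfl
        refine ⟨e'.1, e'.2.le.trans ?_⟩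
        have := pow_le_pow_left₀ (hc t t ht ht) (hS t ht) 2
        linarith) (fun s t hs ht => by
        rw [hYe s hs, hYe t ht, hVe s hs, hVe t ht, (gp_prod h hc hsym hs ht).2.2]
        have h1 := hc s t hs ht
        have h2 := hcS s t hs ht
        have h3 := hk s t hs ht
        nlinarith [mul_le_mul h2 h3 h1 hS0]) hT
    have vb3 := var_bound Z3m (k := fun x => 4 * M ^ 2 * k x) (M := 4 * M ^ 2 * S) (hkc.const_mul _)
      (hki.const_mul _) (fun x => by have := hk0 x; positivity) (fun t ht => by
        rw [hYe t ht, max_eq_left ht]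
        have e := (gp_one h hc ht).2.1.cmul (4 * m t ^ 2)
        have e' := e.congr (g := fun ω => (2 * m t * (X t ω - m t)) ^ 2) (fun ω => by ring) rfl
        refine ⟨e'.1, e'.2.le.trans ?_⟩
        have h1 := sq_le_sq' (by linarith [abs_le.1 (hM t ht) |>.1]) (abs_le.1 (hM t ht)).2
        have h2 := hS t ht
        have h3 := hc t t ht ht
        have := mul_le_mul h1 h2 h3 (sq_nonneg M)
        linarith) (fun s t hs ht => by
        rw [hYe s hs, hYe t ht, max_eq_left ht, max_eq_left hs]
        have e := (gp_prod h hc hsym hs ht).1.cmul (4 * (m s * m t))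
        have e' := e.congr (g := fun ω => 2 * m s * (X s ω - m s) * (2 * m t * (X t ω - m t)))
          (fun ω => by ring) rfl
        rw [e'.2]
        have h1 := hc s t hs ht
        have h3 := hk s t hs ht
        have h4 : m s * m t ≤ M * M := by
          refine (le_abs_self _).trans ?_
          rw [abs_mul]
          exact mul_le_mul (hM s hs) (hM t ht) (abs_nonneg _) hM0
        have h5 : m s * m t * c s t ≤ M * M * c s t := mul_le_mul_of_nonneg_right h4 h1
        have h6 : M * M * c s t ≤ M * M * k (t - s) := mul_le_mul_of_nonneg_left h3 (mul_nonneg hM0 hM0)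
        nlinarith) hT
    have i2 := vb2.1.const_mul 2
    have i3 := vb3.1.const_mul 2
    refine cheb (i2.add i3) ?_ ?_ hε
    · refine (integral_add i2 i3).le.trans ?_
      rw [integral_const_mul, integral_const_mul]
      have h2 := vb2.2
      have h3 := vb3.2
      rw [integral_const_mul] at h2 h3
      linarith
    · filter_upwards [hpX, p1] with ω hω hω1
      have e : (∫ t in (0:ℝ)..T, X t ω ^ 2) - ∫ t in (0:ℝ)..T, (m t ^ 2 + c t t) =
          (∫ t in (0:ℝ)..T, (Y t ω ^ 2 - V t)) + ∫ t in (0:ℝ)..T, 2 * m (max t 0) * Y t ω := by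
        have q2 : IntervalIntegrable (fun t => Y t ω ^ 2 - V t) volume 0 T := (hω1 T hT).1.sub (vii T)
        have q4 : IntervalIntegrable (fun t => m (max t 0) ^ 2 + V t) volume 0 T := (m2ii T).add (vii T)
        have q3 : IntervalIntegrable (fun t => 2 * m (max t 0) * Y t ω) volume 0 T := by
          have := (((hω T hT).1.sub q4).sub q2)
          refine this.congr (fun t _ => ?_)
          simp only [hY, hV, Pi.sub_apply]; ring
        rw [← ii_congr_max (f := fun t => m t ^ 2 + c t t) hT,
          ← intervalIntegral.integral_sub (hω T hT).1 q4, ← intervalIntegral.integral_add q2 q3]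
        congr 1; ext t
        simp only [hY, hV]; ring
      rw [e]
      simp only [Pi.add_apply]
      nlinarith [sq_nonneg ((∫ t in (0:ℝ)..T, (Y t ω ^ 2 - V t)) - ∫ t in (0:ℝ)..T, 2 * m (max t 0) * Y t ω)]

end

end

section
open MeasureTheory Set Filter
open scoped ENNReal NNReal Topology


lemma ces {f Q : ℝ → ℝ} (hQ : Antitone Q) (hQ0 : ∀ t, 0 ≤ Q t) (hf : ∀ t ≥ 0, |f t| ≤ Q t) {T : ℝ} (hT : 1 ≤ T) :
    |(1 / T) * ∫ t in (0:ℝ)..T, f t| ≤ Q 0 / √T + Q (√T) := by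
  have hT0 : 0 < T := by linarith
  have hs : 0 < √T := Real.sqrt_pos.2 hT0
  have hs2 : √T * √T = T := Real.mul_self_sqrt hT0.le
  have hsT : √T ≤ T := by
    have : 1 ≤ √T := Real.one_le_sqrt.2 hT
    nlinarith
  have h1 : |∫ t in (0:ℝ)..T, f t| ≤ ∫ t in (0:ℝ)..T, Q t := by
    have := intervalIntegral.norm_integral_le_of_norm_le hT0.le (f := f) (g := Q) (μ := volume)
      (ae_of_all _ fun t ht => hf t ht.1.le) hQ.intervalIntegrable
    simpa using this
  have h2 : ∫ t in (0:ℝ)..(√T), Q t ≤ √T * Q 0 := by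
    have := intervalIntegral.integral_mono_on (f := Q) (g := fun _ => Q 0) (μ := volume) hs.le hQ.intervalIntegrable
      (by simp) (fun t ht => hQ ht.1)
    simpa using this
  have h3 : ∫ t in (√T)..T, Q t ≤ T * Q (√T) := by
    have := intervalIntegral.integral_mono_on (f := Q) (g := fun _ => Q (√T)) (μ := volume) hsT hQ.intervalIntegrable
      (by simp) (fun t ht => hQ ht.1)
    refine this.trans ?_
    simp only [intervalIntegral.integral_const, smul_eq_mul]
    exact mul_le_mul_of_nonneg_right (by linarith) (hQ0 _)
  have h4 := intervalIntegral.integral_add_adjacent_intervals (f := Q) (μ := volume) (a := 0) (b := √T) (c := T)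
    hQ.intervalIntegrable hQ.intervalIntegrable
  rw [abs_mul, abs_of_pos (by positivity : 0 < 1 / T)]
  calc 1 / T * |∫ t in (0:ℝ)..T, f t| ≤ 1 / T * (√T * Q 0 + T * Q (√T)) := by
        gcongr; linarith
    _ = Q 0 / √T + Q (√T) := by
        have e : 1 / T * (√T * Q 0) = Q 0 / √T := by
          rw [div_mul_eq_mul_div, one_mul, div_eq_div_iff hT0.ne' hs.ne']
          calc _ = (√T * √T) * Q 0 := by ring
            _ = _ := by rw [hs2]; ring
        rw [mul_add, e]
        field_simp

lemma ces_tendsto {Q : ℝ → ℝ} (h : Tendsto Q atTop (𝓝 0)) : Tendsto (fun T => Q 0 / √T + Q (√T)) atTop (𝓝 0) := by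
  have h1 : Tendsto (fun T : ℝ => √T) atTop atTop := Real.tendsto_sqrt_atTop
  simpa using (h1.const_div_atTop (Q 0)).add (h.comp h1)

lemma fs {T ε a : ℝ} (hT : 0 < T) (hε : 0 < ε) : T * a / (ε * T) ^ 2 = a / (T * ε ^ 2) := by
  field_simp

set_option maxHeartbeats 1000000 in
lemma vou_bounds {α : ℝ} {EE : ℝ → ℝ → ℝ}
    (hE : ∀ β < (0:ℝ), SolvesResolventEq (fractionalKernel α) β (EE β)) (hα : 1/2 < α) (hα1 : α < 1)
    {Ω : Type*} [MeasurableSpace Ω] (P : Measure Ω) [IsProbabilityMeasure P] (x₀ σ l B : ℝ) (hl : 0 < l) :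
    ∃ A ≥ (0:ℝ), ∃ r : ℝ → ℝ, Tendsto r atTop (𝓝 0) ∧ ∀ (X : ℝ → Ω → ℝ) (b β : ℝ), β < 0 → l ≤ |β| → |b| ≤ B →
      Measurable (Function.uncurry X) → IsGaussianProcessOn P (Set.Ici 0) X (meanVOU EE x₀ b β) (covVOU EE σ β) →
      (∀ᵐ ω ∂P, ∀ T ≥ (0:ℝ), IntervalIntegrable (fun t => X t ω ^ 2) volume 0 T ∧
        IntervalIntegrable (fun t => X t ω) volume 0 T) ∧
      (∀ T ≥ (1:ℝ), ∀ ε > (0:ℝ),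
        P {ω | ε + r T ≤ |(1 / T) * (∫ t in (0:ℝ)..T, X t ω) - (b / |β|)|} ≤ ENNReal.ofReal (A / (T * ε ^ 2)) ∧
        P {ω | ε + r T ≤ |(1 / T) * (∫ t in (0:ℝ)..T, X t ω ^ 2) -
          ((b / |β|) ^ 2 + σ ^ 2 * (|β| ^ (1 / α - 2) * Calpha α))|} ≤ ENNReal.ofReal (A / (T * ε ^ 2))) := by
  have h := hE (-1) (by norm_num)
  have hα0 : 0 < α := by linarith
  have hC := Calpha_pos hα hα1 h
  have pG := prim_facts (E1_integrable hα hα1 h) (fun t ht => (E1_pos hα hα1 h ht).le)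
  have pH := prim_facts (E1_sq_integrable hα hα1 h) (fun t ht => sq_nonneg _)
  rw [E1_int_one hα hα1 h] at pG
  rw [E1_sq_int hα hα1 h] at pH
  change MonotoneOn (G1 (EE (-1))) (Ici 0) ∧ (∀ t ≥ 0, 0 ≤ G1 (EE (-1)) t) ∧ (∀ t ≥ 0, G1 (EE (-1)) t ≤ 1) ∧
    Tendsto (G1 (EE (-1))) atTop (𝓝 1) at pG
  change MonotoneOn (H1 (EE (-1))) (Ici 0) ∧ (∀ t ≥ 0, 0 ≤ H1 (EE (-1)) t) ∧ (∀ t ≥ 0, H1 (EE (-1)) t ≤ Calpha α) ∧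
    Tendsto (H1 (EE (-1))) atTop (𝓝 (Calpha α)) at pH
  obtain ⟨Gm, G0, G1', Gt⟩ := pG
  obtain ⟨Hm, H0, H1', Ht⟩ := pH
  set G := G1 (EE (-1))
  set H := H1 (EE (-1))
  set C := Calpha α
  set M := |x₀| + |B| / l with hMdef
  have hM0 : 0 ≤ M := by positivity
  set D := σ ^ 2 * l ^ (1 / α - 2) with hD
  have hD0 : 0 ≤ D := by positivity
  have hμ0 : 0 < l ^ (1 / α) := by positivity
  have mono (μ : ℝ) (hμ : 0 < μ) {F : ℝ → ℝ} (hF : MonotoneOn F (Ici 0)) : Monotone (fun t => F (μ * max t 0)) := by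
    intro s t hst
    apply hF (by simp; positivity) (by simp; positivity)
    gcongr
  set q : ℝ → ℝ := fun t => M * (1 + 2 * M) * (1 - G (l ^ (1 / α) * max t 0)) + D * (C - H (l ^ (1 / α) * max t 0)) with hq
  have hqa : Antitone q := by
    intro s t hst
    have h1 := mono _ hμ0 Gm hst
    have h2 := mono _ hμ0 Hm hst
    simp only at h1 h2
    simp only [hq]
    gcongr
  have hq0 : ∀ t, 0 ≤ q t := by
    intro t
    have hx : 0 ≤ l ^ (1 / α) * max t 0 := by positivity
    have := G1' _ hx
    have := H1' _ hx
    have : 0 ≤ 1 - G (l ^ (1 / α) * max t 0) := by linarith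
    have : 0 ≤ C - H (l ^ (1 / α) * max t 0) := by linarith
    simp only [hq]
    positivity
  have hqt : Tendsto q atTop (𝓝 0) := by
    have hx : Tendsto (fun t : ℝ => l ^ (1 / α) * max t 0) atTop atTop :=
      Tendsto.const_mul_atTop hμ0 (tendsto_atTop_mono (fun t => le_max_left t 0) tendsto_id)
    have h1 := ((Gt.comp hx).const_sub 1).const_mul (M * (1 + 2 * M))
    have h2 := ((Ht.comp hx).const_sub C).const_mul D
    simpa [hq] using h1.add h2
  refine ⟨(1 + (4 * (D * C) + 8 * M ^ 2)) * (σ ^ 2 / l ^ 2), by positivity, fun T => q 0 / √T + q (√T), ces_tendsto hqt, ?_⟩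
  intro X b β hβ hlβ hb hXm hX
  have hlp : 0 < |β| := hl.trans_le hlβ
  have hμ : 0 < |β| ^ (1 / α) := by positivity
  have hμμ : l ^ (1 / α) ≤ |β| ^ (1 / α) := Real.rpow_le_rpow hl.le hlβ (by positivity)
  have hpow : |β| ^ (1 / α - 2) ≤ l ^ (1 / α - 2) := by
    apply Real.rpow_le_rpow_of_nonpos hl hlβ
    rw [sub_nonpos, div_le_iff₀ hα0]; linarith
  have hDD : σ ^ 2 * |β| ^ (1 / α - 2) ≤ D := by rw [hD]; gcongr
  have hDD0 : 0 ≤ σ ^ 2 * |β| ^ (1 / α - 2) := by positivity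
  have hm : ∀ t ≥ 0, meanVOU EE x₀ b β t = b / |β| + (1 - G (|β| ^ (1 / α) * t)) * (x₀ - b / |β|) :=
    fun t ht => mean_eq hE hα hβ x₀ b ht
  have hv : ∀ t ≥ 0, covVOU EE σ β t t = σ ^ 2 * (|β| ^ (1 / α - 2) * H (|β| ^ (1 / α) * t)) :=
    fun t ht => cov_diag hE hα hβ σ ht
  have hbM : |(b / |β|)| ≤ |B| / l := by
    rw [abs_div, abs_abs]
    have : |b| ≤ |B| := hb.trans (le_abs_self B)
    gcongr
  have hx0M : |x₀ - (b / |β|)| ≤ M := (abs_sub _ _).trans (by rw [hMdef]; linarith)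
  have hGle : ∀ t ≥ 0, 0 ≤ 1 - G (|β| ^ (1 / α) * t) ∧ 1 - G (|β| ^ (1 / α) * t) ≤ 1 - G (l ^ (1 / α) * max t 0) := by
    intro t ht
    have hx : 0 ≤ |β| ^ (1 / α) * t := by positivity
    have := G1' _ hx
    have h2 := Gm (a := l ^ (1 / α) * t) (b := |β| ^ (1 / α) * t) (by simp; positivity) (by simp; positivity) (by gcongr)
    rw [max_eq_left ht]
    constructor <;> linarith
  have hHle : ∀ t ≥ 0, 0 ≤ C - H (|β| ^ (1 / α) * t) ∧ C - H (|β| ^ (1 / α) * t) ≤ C - H (l ^ (1 / α) * max t 0) := by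
    intro t ht
    have hx : 0 ≤ |β| ^ (1 / α) * t := by positivity
    have := H1' _ hx
    have h2 := Hm (a := l ^ (1 / α) * t) (b := |β| ^ (1 / α) * t) (by simp; positivity) (by simp; positivity) (by gcongr)
    rw [max_eq_left ht]
    constructor <;> linarith
  have hmd : ∀ t ≥ 0, |meanVOU EE x₀ b β t - (b / |β|)| ≤ M * (1 - G (l ^ (1 / α) * max t 0)) := by
    intro t ht
    rw [hm t ht, add_sub_cancel_left, abs_mul, abs_of_nonneg (hGle t ht).1, mul_comm]
    exact mul_le_mul hx0M (hGle t ht).2 (hGle t ht).1 hM0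
  have hmM : ∀ t ≥ 0, |meanVOU EE x₀ b β t| ≤ M := by
    intro t ht
    have hx : 0 ≤ |β| ^ (1 / α) * t := by positivity
    have e : meanVOU EE x₀ b β t = G (|β| ^ (1 / α) * t) * (b / |β|) + (1 - G (|β| ^ (1 / α) * t)) * x₀ := by
      rw [hm t ht]; ring
    have h0 := G0 _ hx
    have h1 := G1' _ hx
    rw [e]
    refine (abs_add_le _ _).trans ?_
    rw [abs_mul, abs_mul, abs_of_nonneg h0, abs_of_nonneg (hGle t ht).1]
    have a1 : G (|β| ^ (1 / α) * t) * |(b / |β|)| ≤ 1 * (|B| / l) := mul_le_mul h1 hbM (abs_nonneg _) zero_le_one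
    have a2 : (1 - G (|β| ^ (1 / α) * t)) * |x₀| ≤ 1 * |x₀| := mul_le_mul_of_nonneg_right (by linarith) (abs_nonneg _)
    rw [hMdef]; linarith
  have hvS : ∀ t ≥ 0, covVOU EE σ β t t ≤ D * C := by
    intro t ht
    rw [hv t ht, ← mul_assoc]
    exact mul_le_mul hDD (by linarith [(hHle t ht).1]) (H0 _ (by positivity)) hD0
  have hv0 : ∀ t ≥ 0, 0 ≤ covVOU EE σ β t t := fun t ht => (cov_bounds hE hα hα1 hβ σ ht ht).1
  have mm : Measurable fun t => meanVOU EE x₀ b β (max t 0) := by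
    have : (fun t => meanVOU EE x₀ b β (max t 0)) =
        fun t => b / |β| + (1 - G (|β| ^ (1 / α) * max t 0)) * (x₀ - b / |β|) := by
      ext t; exact hm _ (le_max_right _ _)
    rw [this]
    exact (((mono _ hμ Gm).measurable.const_sub 1).mul_const _).const_add _
  have mv : Measurable fun t => covVOU EE σ β (max t 0) (max t 0) := by
    have : (fun t => covVOU EE σ β (max t 0) (max t 0)) =
        fun t => σ ^ 2 * (|β| ^ (1 / α - 2) * H (|β| ^ (1 / α) * max t 0)) := by
      ext t; exact hv _ (le_max_right _ _)
    rw [this]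
    exact ((mono _ hμ Hm).measurable.const_mul _).const_mul _
  have mi : ∀ T, IntervalIntegrable (fun t => meanVOU EE x₀ b β (max t 0)) volume 0 T :=
    ii_bdd mm (fun t => hmM _ (le_max_right _ _))
  have m2i : ∀ T, IntervalIntegrable (fun t => meanVOU EE x₀ b β (max t 0) ^ 2 +
      covVOU EE σ β (max t 0) (max t 0)) volume 0 T := by
    refine ii_bdd (M := M ^ 2 + D * C) ((mm.pow_const 2).add mv) (fun t => ?_)
    have ht : 0 ≤ max t 0 := le_max_right _ _
    rw [abs_of_nonneg (add_nonneg (sq_nonneg _) (hv0 _ ht))]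
    have := sq_le_sq' (by linarith [abs_le.1 (hmM _ ht) |>.1]) (abs_le.1 (hmM _ ht)).2
    linarith [hvS _ ht]
  have kk := kern_int hE hα hα1 hβ σ
  obtain ⟨d1, d2, d3⟩ := dev_bound hXm hX (fun s t hs ht => (cov_bounds hE hα hα1 hβ σ hs ht).1) (cov_symm σ)
    (kern_cont hE hα hα1 σ) kk.1 (fun x => by
      have : 0 ≤ autoc (EE (-1)) |(|β| ^ (1 / α) * x)| :=
        setIntegral_nonneg measurableSet_Ioi fun r hr => mul_nonneg
          (E1_pos hα hα1 h (by have : 0 < r := hr; positivity)).le (E1_pos hα hα1 h hr).le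
      positivity)
    (fun s t hs ht => (cov_bounds hE hα hα1 hβ σ hs ht).2) hvS hmM mm mv
  rw [kk.2] at d2 d3
  have hkk : σ ^ 2 / |β| ^ 2 ≤ σ ^ 2 / l ^ 2 := by gcongr
  have hkk0 : 0 ≤ σ ^ 2 / |β| ^ 2 := by positivity
  have hA : 0 ≤ 4 * (D * C) + 8 * M ^ 2 := by positivity
  refine ⟨d1, fun T hT ε hε => ⟨?_, ?_⟩⟩
  · have hT0 : 0 < T := by linarith
    have det : |(1 / T) * (∫ t in (0:ℝ)..T, meanVOU EE x₀ b β t) - (b / |β|)| ≤ q 0 / √T + q (√T) := by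
      have e : (1 / T) * (∫ t in (0:ℝ)..T, meanVOU EE x₀ b β t) - b / |β| =
          (1 / T) * ∫ t in (0:ℝ)..T, (meanVOU EE x₀ b β (max t 0) - b / |β|) := by
        rw [intervalIntegral.integral_sub (mi T) (by simp), ii_congr_max (f := fun t => meanVOU EE x₀ b β t) hT0.le]
        simp; field_simp
      rw [e]
      refine ces hqa hq0 (fun t ht => ?_) hT
      rw [max_eq_left ht]
      refine (hmd t ht).trans ?_
      have g0 : 0 ≤ 1 - G (l ^ (1 / α) * max t 0) := (hGle t ht).1.trans (hGle t ht).2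
      have g1 : 0 ≤ C - H (l ^ (1 / α) * max t 0) := (hHle t ht).1.trans (hHle t ht).2
      have g2 : 0 ≤ M * (2 * M) * (1 - G (l ^ (1 / α) * max t 0)) := by positivity
      have g3 : 0 ≤ D * (C - H (l ^ (1 / α) * max t 0)) := by positivity
      simp only [hq]; linarith
    refine (measure_mono fun ω hω => ?_).trans ((d2 T hT0.le (ε * T) (by positivity)).trans ?_)
    · simp only [mem_ofPred_eq] at hω ⊢
      have e : (1 / T) * (∫ t in (0:ℝ)..T, X t ω) - b / |β| =
        (1 / T) * ((∫ t in (0:ℝ)..T, X t ω) - ∫ t in (0:ℝ)..T, meanVOU EE x₀ b β t) +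
          ((1 / T) * (∫ t in (0:ℝ)..T, meanVOU EE x₀ b β t) - b / |β|) := by ring
      rw [e] at hω
      have := hω.trans (abs_add_le _ _)
      have h5 : ε ≤ |(1 / T) * ((∫ t in (0:ℝ)..T, X t ω) - ∫ t in (0:ℝ)..T, meanVOU EE x₀ b β t)| := by linarith
      rw [abs_mul, abs_of_pos (by positivity : 0 < 1 / T), one_div, inv_mul_eq_div, le_div_iff₀ hT0] at h5
      exact h5
    · apply ENNReal.ofReal_le_ofReal
      have : T * (σ ^ 2 / |β| ^ 2) / (ε * T) ^ 2 = (σ ^ 2 / |β| ^ 2) / (T * ε ^ 2) := by field_simp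
      rw [this]
      gcongr
      nlinarith [mul_nonneg hA (hkk0.trans hkk)]
  · have hT0 : 0 < T := by linarith
    have det : |(1 / T) * (∫ t in (0:ℝ)..T, (meanVOU EE x₀ b β t ^ 2 + covVOU EE σ β t t)) -
        ((b / |β|) ^ 2 + σ ^ 2 * (|β| ^ (1 / α - 2) * C))| ≤ q 0 / √T + q (√T) := by
      have e : (1 / T) * (∫ t in (0:ℝ)..T, (meanVOU EE x₀ b β t ^ 2 + covVOU EE σ β t t)) -
            ((b / |β|) ^ 2 + σ ^ 2 * (|β| ^ (1 / α - 2) * C)) =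
          (1 / T) * ∫ t in (0:ℝ)..T, (meanVOU EE x₀ b β (max t 0) ^ 2 + covVOU EE σ β (max t 0) (max t 0)
            - ((b / |β|) ^ 2 + σ ^ 2 * (|β| ^ (1 / α - 2) * C))) := by
        rw [intervalIntegral.integral_sub (m2i T) (by simp),
          ii_congr_max (f := fun t => meanVOU EE x₀ b β t ^ 2 + covVOU EE σ β t t) hT0.le,
          intervalIntegral.integral_const, smul_eq_mul, mul_sub, ← mul_assoc (1 / T) (T - 0)]
        rw [show 1 / T * (T - 0) = 1 by field_simp; ring, one_mul]
      rw [e]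
      refine ces hqa hq0 (fun t ht => ?_) hT
      have g0 : 0 ≤ 1 - G (l ^ (1 / α) * max t 0) := (hGle t ht).1.trans (hGle t ht).2
      have a1 : |meanVOU EE x₀ b β t ^ 2 - (b / |β|) ^ 2| ≤ M * (2 * M) * (1 - G (l ^ (1 / α) * max t 0)) := by
        rw [sq_sub_sq, abs_mul]
        have z1 : |meanVOU EE x₀ b β t + (b / |β|)| ≤ 2 * M := (abs_add_le _ _).trans (by
          have : |B| / l ≤ M := by rw [hMdef]; linarith [abs_nonneg x₀]
          linarith [hmM t ht])
        calc _ ≤ (2 * M) * (M * (1 - G (l ^ (1 / α) * max t 0))) :=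
              mul_le_mul z1 (hmd t ht) (abs_nonneg _) (by positivity)
          _ = _ := by ring
      have a2 : |covVOU EE σ β t t - σ ^ 2 * (|β| ^ (1 / α - 2) * C)| ≤ D * (C - H (l ^ (1 / α) * max t 0)) := by
        rw [abs_sub_comm, hv t ht]
        rw [show σ ^ 2 * (|β| ^ (1 / α - 2) * C) - σ ^ 2 * (|β| ^ (1 / α - 2) * H (|β| ^ (1 / α) * t)) =
          σ ^ 2 * |β| ^ (1 / α - 2) * (C - H (|β| ^ (1 / α) * t)) by ring,
          abs_of_nonneg (mul_nonneg hDD0 (hHle t ht).1)]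
        exact mul_le_mul hDD (hHle t ht).2 (hHle t ht).1 hD0
      rw [max_eq_left ht, show ∀ a b c d : ℝ, a + b - (c + d) = (a - c) + (b - d) by intros; ring]
      refine (abs_add_le _ _).trans ?_
      have : 0 ≤ M * (1 - G (l ^ (1 / α) * max t 0)) := by positivity
      simp only [hq]; linarith
    refine (measure_mono fun ω hω => ?_).trans ((d3 T hT0.le (ε * T) (by positivity)).trans ?_)
    · simp only [mem_ofPred_eq] at hω ⊢
      have e : (1 / T) * (∫ t in (0:ℝ)..T, X t ω ^ 2) - ((b / |β|) ^ 2 + σ ^ 2 * (|β| ^ (1 / α - 2) * C)) =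
        (1 / T) * ((∫ t in (0:ℝ)..T, X t ω ^ 2) - ∫ t in (0:ℝ)..T, (meanVOU EE x₀ b β t ^ 2 + covVOU EE σ β t t)) +
          ((1 / T) * (∫ t in (0:ℝ)..T, (meanVOU EE x₀ b β t ^ 2 + covVOU EE σ β t t)) -
            ((b / |β|) ^ 2 + σ ^ 2 * (|β| ^ (1 / α - 2) * C))) := by ring
      rw [e] at hω
      have := hω.trans (abs_add_le _ _)
      have h5 : ε ≤ |(1 / T) * ((∫ t in (0:ℝ)..T, X t ω ^ 2) -
        ∫ t in (0:ℝ)..T, (meanVOU EE x₀ b β t ^ 2 + covVOU EE σ β t t))| := by linarith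
      rw [abs_mul, abs_of_pos (by positivity : 0 < 1 / T), one_div, inv_mul_eq_div, le_div_iff₀ hT0] at h5
      exact h5
    · apply ENNReal.ofReal_le_ofReal
      have : T * ((4 * (D * C) + 8 * M ^ 2) * (σ ^ 2 / |β| ^ 2)) / (ε * T) ^ 2 =
        ((4 * (D * C) + 8 * M ^ 2) * (σ ^ 2 / |β| ^ 2)) / (T * ε ^ 2) := fs hT0 hε
      rw [this]
      refine div_le_div_of_nonneg_right ?_ (by positivity)
      exact mul_le_mul (by linarith) hkk hkk0 (by linarith)

end

section
open MeasureTheory Set Filter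
open scoped ENNReal NNReal Topology


def phiEst (α σ : ℝ) (z : ℝ × ℝ) : ℝ × ℝ :=
  (z.1 * (Calpha α * σ ^ 2 / (z.2 - z.1 ^ 2)) ^ (α / (2 * α - 1)),
    -(Calpha α * σ ^ 2 / (z.2 - z.1 ^ 2)) ^ (α / (2 * α - 1)))

def psiMom (α σ : ℝ) (z : ℝ × ℝ) : ℝ × ℝ :=
  (z.1 / |z.2|, (z.1 / |z.2|) ^ 2 + σ ^ 2 * (|z.2| ^ (1 / α - 2) * Calpha α))

lemma phi_psi {α σ : ℝ} (hα : 1/2 < α) (hC : 0 < Calpha α) (hσ : 0 < σ) {z : ℝ × ℝ} (hz : z.2 < 0) :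
    phiEst α σ (psiMom α σ z) = z ∧ ContinuousAt (phiEst α σ) (psiMom α σ z) := by
  have hl : 0 < |z.2| := abs_pos.2 hz.ne
  have hp : 0 < |z.2| ^ (1 / α - 2) := by positivity
  have e1 : (psiMom α σ z).2 - (psiMom α σ z).1 ^ 2 = σ ^ 2 * (|z.2| ^ (1 / α - 2) * Calpha α) := by
    simp [psiMom]
  constructor
  · have e2 : (Calpha α * σ ^ 2 / ((psiMom α σ z).2 - (psiMom α σ z).1 ^ 2)) ^ (α / (2 * α - 1)) = |z.2| := by
      rw [e1]
      have : Calpha α * σ ^ 2 / (σ ^ 2 * (|z.2| ^ (1 / α - 2) * Calpha α)) = |z.2| ^ (-(1 / α - 2)) := by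
        rw [Real.rpow_neg hl.le]; field_simp
      rw [this, ← Real.rpow_mul hl.le]
      have : -(1 / α - 2) * (α / (2 * α - 1)) = 1 := by
        have h1 : 2 * α - 1 ≠ 0 := by linarith
        have h2 : α ≠ 0 := by linarith
        rw [neg_sub, show 2 - 1 / α = (2 * α - 1) / α by field_simp, div_mul_div_comm, mul_comm,
          div_self (mul_ne_zero h2 h1)]
      rw [this, Real.rpow_one]
    unfold phiEst
    rw [e2]
    ext
    · simp only [psiMom]; field_simp
    · simp [abs_of_neg hz]
  · have hpos : 0 < (psiMom α σ z).2 - (psiMom α σ z).1 ^ 2 := by rw [e1]; positivity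
    have c : ContinuousAt (fun w : ℝ × ℝ => (Calpha α * σ ^ 2 / (w.2 - w.1 ^ 2)) ^ (α / (2 * α - 1))) (psiMom α σ z) := by
      refine ContinuousAt.rpow_const (ContinuousAt.div (by fun_prop) (by fun_prop) hpos.ne') (Or.inl ?_)
      positivity
    exact (continuousAt_fst.mul c).prodMk c.neg

lemma part_i {α σ x₀ : ℝ} {EE : ℝ → ℝ → ℝ}
    (hE : ∀ β < (0:ℝ), SolvesResolventEq (fractionalKernel α) β (EE β)) (hα : 1/2 < α) (hα1 : α < 1) (hσ : 0 < σ)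
    {Ω : Type*} [MeasurableSpace Ω] (P : Measure Ω) [IsProbabilityMeasure P]
    (X : ℝ → ℝ → ℝ → Ω → ℝ) (hXjm : ∀ b β, Measurable (Function.uncurry (X b β)))
    (hX : ∀ (b : ℝ), ∀ β < (0:ℝ), IsGaussianProcessOn P (Set.Ici 0) (X b β)
      (meanVOU EE x₀ b β) (covVOU EE σ β)) (ε : ℝ) (hε : 0 < ε) (Θ : Set (ℝ × ℝ)) (hΘ : IsCompact Θ)
      (hΘ0 : Θ ⊆ Set.univ ×ˢ Set.Iio (0:ℝ)) (δ : ℝ) (hδ : 0 < δ) : ∃ T₀ : ℝ, ∀ T ≥ T₀, ∀ bβ ∈ Θ,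
        P {ω | ε < dist (phiEst α σ ((1/T) * ∫ t in (0:ℝ)..T, X bβ.1 bβ.2 t ω,
          (1/T) * ∫ t in (0:ℝ)..T, (X bβ.1 bβ.2 t ω) ^ 2)) bβ} < ENNReal.ofReal δ := by
  have hC := Calpha_pos hα hα1 (hE (-1) (by norm_num))
  have hneg : ∀ z ∈ Θ, z.2 < 0 := fun z hz => (hΘ0 hz).2
  obtain ⟨l, hl, hlΘ⟩ : ∃ l > 0, ∀ z ∈ Θ, l ≤ |z.2| := by
    rcases Θ.eq_empty_or_nonempty with h | h
    · exact ⟨1, one_pos, by simp [h]⟩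
    · obtain ⟨z, hz, hm⟩ := hΘ.exists_isMinOn h (f := fun z : ℝ × ℝ => |z.2|) (by fun_prop)
      exact ⟨|z.2|, abs_pos.2 (hneg z hz).ne, fun w hw => hm hw⟩
  obtain ⟨B, hB⟩ := hΘ.exists_bound_of_continuousOn (f := fun z : ℝ × ℝ => z.1) (by fun_prop)
  have hpc : ContinuousOn (psiMom α σ) Θ := by
    have h1 : ContinuousOn (fun z : ℝ × ℝ => z.1 / |z.2|) Θ :=
      ContinuousOn.div (by fun_prop) (by fun_prop) (fun z hz => (abs_pos.2 (hneg z hz).ne).ne')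
    have h2 : ContinuousOn (fun z : ℝ × ℝ => |z.2| ^ (1 / α - 2)) Θ :=
      ContinuousOn.rpow_const (by fun_prop) (fun z hz => Or.inl (abs_pos.2 (hneg z hz).ne).ne')
    exact h1.prodMk ((h1.pow 2).add ((h2.mul continuousOn_const).const_smul (σ ^ 2)))
  have hK := hΘ.image_of_continuousOn hpc
  have huc := hK.uniformContinuousAt_of_continuousAt (phiEst α σ) (by
    rintro _ ⟨z, hz, rfl⟩
    exact (phi_psi hα hC hσ (hneg z hz)).2) (Metric.dist_mem_uniformity hε)
  obtain ⟨η, hη, hηs⟩ := Metric.mem_uniformity_dist.1 huc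
  obtain ⟨A, hA, r, hr, hb⟩ := vou_bounds hE hα hα1 P x₀ σ l B hl
  have hr' : ∀ᶠ T in atTop, r T < η / 2 := hr.eventually (gt_mem_nhds (by positivity))
  have hA' : ∀ᶠ T : ℝ in atTop, A / (T * (η / 2) ^ 2) < δ / 2 := by
    have : Tendsto (fun T : ℝ => A / (T * (η / 2) ^ 2)) atTop (𝓝 0) :=
      (tendsto_id.atTop_mul_const (by positivity)).const_div_atTop A
    exact this.eventually (gt_mem_nhds (by positivity))
  obtain ⟨T₀, hT₀⟩ := eventually_atTop.1 ((eventually_ge_atTop (1:ℝ)).and (hr'.and hA'))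
  refine ⟨T₀, fun T hT z hz => ?_⟩
  obtain ⟨hT1, hrT, hAT⟩ := hT₀ T hT
  obtain ⟨-, hb2⟩ := hb (X z.1 z.2) z.1 z.2 (hneg z hz) (hlΘ z hz) (hB z hz) (hXjm _ _) (hX _ _ (hneg z hz))
  obtain ⟨p1, p2⟩ := hb2 T hT1 (η / 2) (by positivity)
  have hA0 : 0 ≤ A / (T * (η / 2) ^ 2) := by positivity
  refine lt_of_le_of_lt ((measure_mono ?_).trans ((measure_union_le _ _).trans (add_le_add p1 p2))) ?_
  · intro ω hω
    by_contra hcon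
    simp only [mem_union, mem_ofPred_eq, not_or, not_le] at hcon hω
    refine hω.not_ge ?_
    have hd : dist (psiMom α σ z) ((1/T) * ∫ t in (0:ℝ)..T, X z.1 z.2 t ω,
          (1/T) * ∫ t in (0:ℝ)..T, (X z.1 z.2 t ω) ^ 2) < η := by
      rw [Prod.dist_eq, dist_comm, max_lt_iff, Real.dist_eq, dist_comm, Real.dist_eq]
      simp only [psiMom]
      exact ⟨by linarith [hcon.1], by linarith [hcon.2]⟩
    have := hηs hd ⟨z, hz, rfl⟩
    simp only [mem_ofPred_eq] at this
    rw [(phi_psi hα hC hσ (hneg z hz)).1, dist_comm] at this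
    exact this.le
  · rw [← ENNReal.ofReal_add hA0 hA0]
    exact (ENNReal.ofReal_lt_ofReal_iff hδ).2 (by linarith)

lemma sq_conv {Ω : Type*} [MeasurableSpace Ω] (P : Measure Ω) [IsProbabilityMeasure P] {F : ℝ → Ω → ℝ} {r : ℝ → ℝ}
    {A a : ℝ} (hA : 0 ≤ A) (hr : Tendsto r atTop (𝓝 0))
    (hF : ∀ T ≥ (1:ℝ), ∀ ε > (0:ℝ), P {ω | ε + r T ≤ |(1 / T) * F T ω - a|} ≤ ENNReal.ofReal (A / (T * ε ^ 2))) :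
    ∀ᵐ ω ∂P, Tendsto (fun n : ℕ => (1 / (n:ℝ) ^ 2) * F ((n:ℝ) ^ 2) ω) atTop (𝓝 a) := by
  have key : ∀ j : ℕ, ∀ᵐ ω ∂P, ∀ᶠ n : ℕ in atTop,
      ω ∉ {ω | 1 / ((j:ℝ) + 1) + r (((n + 1 : ℕ):ℝ) ^ 2) ≤ |(1 / ((n + 1 : ℕ):ℝ) ^ 2) * F (((n + 1 : ℕ):ℝ) ^ 2) ω - a|} := by
    intro j
    refine ae_eventually_notMem (ne_of_lt ?_)
    have hs : Summable (fun n : ℕ => A / (((n + 1 : ℕ):ℝ) ^ 2 * (1 / ((j:ℝ) + 1)) ^ 2)) := by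
      have h0 : Summable (fun n : ℕ => 1 / ((n:ℝ) ^ 2)) := Real.summable_one_div_nat_pow.2 (by norm_num)
      have h1 := (summable_nat_add_iff 1).2 h0
      refine (h1.mul_left (A / (1 / ((j:ℝ) + 1)) ^ 2)).congr (fun n => ?_)
      rw [div_mul_div_comm, mul_one, mul_comm]
    refine lt_of_le_of_lt (ENNReal.tsum_le_tsum fun n => hF _ ?_ _ (by positivity)) ?_
    · have : (1:ℝ) ≤ ((n + 1 : ℕ):ℝ) := by push_cast; linarith [(Nat.cast_nonneg n : (0:ℝ) ≤ n)]
      exact one_le_pow₀ this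
    · rw [← ENNReal.ofReal_tsum_of_nonneg (fun n => by positivity) hs]
      exact ENNReal.ofReal_lt_top
  filter_upwards [ae_all_iff.2 key] with ω hω
  rw [← tendsto_add_atTop_iff_nat 1]
  rw [Metric.tendsto_nhds]
  intro ε hε
  obtain ⟨j, hj⟩ := exists_nat_one_div_lt (half_pos hε)
  have hsq : Tendsto (fun n : ℕ => ((n + 1 : ℕ):ℝ) ^ 2) atTop atTop :=
    (tendsto_pow_atTop (by norm_num)).comp (tendsto_natCast_atTop_atTop.comp (tendsto_add_atTop_nat 1))
  filter_upwards [hω j, (hr.comp hsq).eventually (gt_mem_nhds (half_pos hε))] with n h1 h2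
  simp only [mem_ofPred_eq, not_le, Function.comp] at h1 h2
  rw [Real.dist_eq]
  linarith

lemma interp {F : ℝ → ℝ} {a : ℝ} (hF : MonotoneOn F (Ici 0)) (hF0 : ∀ t ≥ 0, 0 ≤ F t)
    (h : Tendsto (fun n : ℕ => (1 / (n:ℝ) ^ 2) * F ((n:ℝ) ^ 2)) atTop (𝓝 a)) :
    Tendsto (fun T => (1 / T) * F T) atTop (𝓝 a) := by
  have hfl : Tendsto (fun T : ℝ => ⌊√T⌋₊) atTop atTop := tendsto_nat_floor_atTop.comp Real.tendsto_sqrt_atTop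
  have hrat : Tendsto (fun n : ℕ => ((n:ℝ) / (n + 1)) ^ 2) atTop (𝓝 1) := by
    simpa using (tendsto_natCast_div_add_atTop (1:ℝ)).pow 2
  have lo : Tendsto (fun n : ℕ => (1 / (n:ℝ) ^ 2) * F ((n:ℝ) ^ 2) * ((n:ℝ) / (n + 1)) ^ 2) atTop (𝓝 a) := by
    simpa using h.mul hrat
  have hi : Tendsto (fun n : ℕ => (1 / ((n + 1 : ℕ):ℝ) ^ 2) * F (((n + 1 : ℕ):ℝ) ^ 2) / ((n:ℝ) / (n + 1)) ^ 2) atTop (𝓝 a) := by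
    have := ((tendsto_add_atTop_iff_nat 1).2 h).div hrat one_ne_zero
    rw [div_one] at this
    exact this
  refine tendsto_of_tendsto_of_tendsto_of_le_of_le' (lo.comp hfl) (hi.comp hfl) ?_ ?_
  · filter_upwards [eventually_ge_atTop (1:ℝ)] with T hT
    have hs : 1 ≤ √T := Real.one_le_sqrt.2 hT
    have hn : 1 ≤ ⌊√T⌋₊ := Nat.le_floor (by simpa using hs)
    have h1 : (⌊√T⌋₊:ℝ) ≤ √T := Nat.floor_le (by linarith)
    have h2 : √T < ⌊√T⌋₊ + 1 := Nat.lt_floor_add_one _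
    have e : √T ^ 2 = T := Real.sq_sqrt (by linarith)
    have hn' : (1:ℝ) ≤ ⌊√T⌋₊ := by exact_mod_cast hn
    simp only [Function.comp]
    generalize (⌊√T⌋₊:ℝ) = n at *
    have hT2 : T ≤ (n + 1) ^ 2 := by rw [← e]; gcongr
    have hT1 : n ^ 2 ≤ T := by rw [← e]; gcongr
    have e2 : 1 / n ^ 2 * F (n ^ 2) * (n / (n + 1)) ^ 2 = (1 / (n + 1) ^ 2) * F (n ^ 2) := by field_simp
    rw [e2]
    have m := hF (a := n ^ 2) (b := T) (by simp; positivity) (by simp; linarith) hT1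
    have := hF0 (n ^ 2) (by positivity)
    gcongr
  · filter_upwards [eventually_ge_atTop (1:ℝ)] with T hT
    have hs : 1 ≤ √T := Real.one_le_sqrt.2 hT
    have hn : 1 ≤ ⌊√T⌋₊ := Nat.le_floor (by simpa using hs)
    have h1 : (⌊√T⌋₊:ℝ) ≤ √T := Nat.floor_le (by linarith)
    have h2 : √T < ⌊√T⌋₊ + 1 := Nat.lt_floor_add_one _
    have e : √T ^ 2 = T := Real.sq_sqrt (by linarith)
    have hn' : (1:ℝ) ≤ ⌊√T⌋₊ := by exact_mod_cast hn
    simp only [Function.comp, Nat.cast_add, Nat.cast_one]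
    generalize (⌊√T⌋₊:ℝ) = n at *
    have hT2 : T ≤ (n + 1) ^ 2 := by rw [← e]; gcongr
    have hT1 : n ^ 2 ≤ T := by rw [← e]; gcongr
    have e2 : 1 / (n + 1) ^ 2 * F ((n + 1) ^ 2) / (n / (n + 1)) ^ 2 = (1 / n ^ 2) * F ((n + 1) ^ 2) := by field_simp
    rw [e2]
    have m := hF (a := T) (b := (n + 1) ^ 2) (by simp; linarith) (by simp; positivity) hT2
    have := hF0 T (by linarith)
    gcongr

lemma part_ii {α σ x₀ : ℝ} {EE : ℝ → ℝ → ℝ}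
    (hE : ∀ β < (0:ℝ), SolvesResolventEq (fractionalKernel α) β (EE β)) (hα : 1/2 < α) (hα1 : α < 1)
    {Ω : Type*} [MeasurableSpace Ω] (P : Measure Ω) [IsProbabilityMeasure P]
    (X : ℝ → Ω → ℝ) (hXjm : Measurable (Function.uncurry X)) {b β : ℝ} (hβ : β < 0)
    (hX : IsGaussianProcessOn P (Set.Ici 0) X (meanVOU EE x₀ b β) (covVOU EE σ β)) :
    ∀ᵐ ω ∂P, Tendsto (fun T : ℝ => ((1/T) * ∫ t in (0:ℝ)..T, X t ω, (1/T) * ∫ t in (0:ℝ)..T, X t ω ^ 2))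
      atTop (𝓝 (psiMom α σ (b, β))) := by
  obtain ⟨A, hA, r, hr, hb⟩ := vou_bounds hE hα hα1 P x₀ σ |β| |b| (abs_pos.2 hβ.ne)
  obtain ⟨hi, hp⟩ := hb X b β hβ le_rfl le_rfl hXjm hX
  have s1 := sq_conv P hA hr (fun T hT ε hε => (hp T hT ε hε).1)
  have s2 := sq_conv P hA hr (fun T hT ε hε => (hp T hT ε hε).2)
  filter_upwards [hi, s1, s2] with ω hi s1 s2
  have mono {f : ℝ → ℝ} (hf : ∀ T ≥ 0, IntervalIntegrable f volume 0 T) (h0 : ∀ t, 0 ≤ f t) :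
      MonotoneOn (fun T => ∫ t in (0:ℝ)..T, f t) (Ici 0) ∧ ∀ T ≥ 0, 0 ≤ ∫ t in (0:ℝ)..T, f t := by
    refine ⟨fun S hS T hT hST => ?_, fun T hT => intervalIntegral.integral_nonneg hT fun t _ => h0 t⟩
    have := intervalIntegral.integral_interval_sub_left (hf T hT) (hf S hS)
    have h2 : 0 ≤ ∫ t in S..T, f t := intervalIntegral.integral_nonneg hST fun t _ => h0 t
    linarith
  have i1 : ∀ T ≥ (0:ℝ), IntervalIntegrable (fun t => (X t ω + 1) ^ 2) volume 0 T := by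
    intro T hT
    have := ((hi T hT).1.add ((hi T hT).2.const_mul 2)).add (intervalIntegrable_const (c := (1:ℝ)))
    refine this.congr (fun t _ => ?_)
    show X t ω ^ 2 + 2 * X t ω + 1 = (X t ω + 1) ^ 2
    ring
  have e1 : ∀ T ≥ (0:ℝ), ∫ t in (0:ℝ)..T, (X t ω + 1) ^ 2 =
      (∫ t in (0:ℝ)..T, X t ω ^ 2) + 2 * (∫ t in (0:ℝ)..T, X t ω) + T := by
    intro T hT
    rw [← intervalIntegral.integral_const_mul, ← intervalIntegral.integral_add (hi T hT).1 ((hi T hT).2.const_mul 2)]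
    have : T = ∫ t in (0:ℝ)..T, (1:ℝ) := by simp
    nth_rewrite 3 [this]
    rw [← intervalIntegral.integral_add ((hi T hT).1.add ((hi T hT).2.const_mul 2)) intervalIntegrable_const]
    congr 1; ext t; ring
  have c2 := interp (mono (fun T hT => (hi T hT).1) (fun t => sq_nonneg _)).1
    (mono (fun T hT => (hi T hT).1) (fun t => sq_nonneg _)).2 s2
  have c3 := interp (F := fun T => ∫ t in (0:ℝ)..T, (X t ω + 1) ^ 2) (mono i1 (fun t => sq_nonneg _)).1
    (mono i1 (fun t => sq_nonneg _)).2 (a := _ + 2 * _ + 1) (by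
      refine ((s2.add (s1.const_mul 2)).add_const 1).congr' ?_
      filter_upwards [eventually_ge_atTop 1] with n hn
      have : (1:ℝ) ≤ n := by exact_mod_cast hn
      rw [e1 _ (by positivity)]
      field_simp)
  refine Tendsto.prodMk_nhds ?_ c2
  have c4 := ((c3.sub c2).sub_const 1).div_const 2
  refine Tendsto.congr' ?_ (c4.trans (le_of_eq ?_))
  · filter_upwards [eventually_ge_atTop (1:ℝ)] with T hT
    rw [e1 _ (by linarith)]
    field_simp
    ring
  · congr 1
    ring

end

/-- Consistency of the method-of-moments estimators for the
fractional Volterra Ornstein–Uhlenbeck process: consistency in probability locally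
uniformly on compacts `Θ ⊂ ℝ × (-∞,0)`, and strong consistency along sequences
`T_n ↗ ∞` with `p`-summable relative gaps. -/
theorem fractional_VOU_method_of_moments_consistency
    (α x₀ σ : ℝ) (hα : α ∈ Set.Ioo (1/2 : ℝ) 1) (hσ : 0 < σ)
    (E : ℝ → ℝ → ℝ)
    (hE : ∀ β < (0:ℝ), SolvesResolventEq (fractionalKernel α) β (E β))
    {Ω : Type*} [MeasurableSpace Ω] (P : Measure Ω) [IsProbabilityMeasure P]
    (X : ℝ → ℝ → ℝ → Ω → ℝ)
    (hXjm : ∀ b β, Measurable (Function.uncurry (X b β)))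
    -- `X` is the (Gaussian) fractional VOU process with parameters `(b,β)`
    (hX : ∀ (b : ℝ), ∀ β < (0:ℝ), IsGaussianProcessOn P (Set.Ici 0) (X b β)
      (meanVOU E x₀ b β) (covVOU E σ β)) :
    -- (i) consistency in probability, locally uniformly in `(b,β)`
    (∀ ε > (0:ℝ), ∀ Θ : Set (ℝ × ℝ), IsCompact Θ → Θ ⊆ Set.univ ×ˢ Set.Iio (0:ℝ) →
      ∀ δ > (0:ℝ), ∃ T₀ : ℝ, ∀ T ≥ T₀, ∀ bβ ∈ Θ,
        P {ω | ε < dist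
            (((1/T) * ∫ t in (0:ℝ)..T, X bβ.1 bβ.2 t ω) *
                (Calpha α * σ ^ 2 /
                  ((1/T) * (∫ t in (0:ℝ)..T, (X bβ.1 bβ.2 t ω) ^ 2) -
                    ((1/T) * ∫ t in (0:ℝ)..T, X bβ.1 bβ.2 t ω) ^ 2)) ^ (α / (2 * α - 1)),
              -(Calpha α * σ ^ 2 /
                  ((1/T) * (∫ t in (0:ℝ)..T, (X bβ.1 bβ.2 t ω) ^ 2) -
                    ((1/T) * ∫ t in (0:ℝ)..T, X bβ.1 bβ.2 t ω) ^ 2)) ^ (α / (2 * α - 1)))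
            bβ} < ENNReal.ofReal δ) ∧
    -- (ii) strong consistency along sequences with `p`-summable relative gaps
    (∀ (b : ℝ), ∀ β < (0:ℝ), ∀ p ≥ (1:ℝ), ∀ T : ℕ → ℝ,
      (∀ n, 0 < T n) → Monotone T → Tendsto T atTop atTop →
      Summable (fun n => |1 - T n / T (n + 1)| ^ p) →
      P {ω | Tendsto (fun n =>
          (((1 / T n) * ∫ t in (0:ℝ)..(T n), X b β t ω) *
              (Calpha α * σ ^ 2 /
                ((1 / T n) * (∫ t in (0:ℝ)..(T n), (X b β t ω) ^ 2) -
                  ((1 / T n) * ∫ t in (0:ℝ)..(T n), X b β t ω) ^ 2)) ^ (α / (2 * α - 1)),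
            -(Calpha α * σ ^ 2 /
                ((1 / T n) * (∫ t in (0:ℝ)..(T n), (X b β t ω) ^ 2) -
                  ((1 / T n) * ∫ t in (0:ℝ)..(T n), X b β t ω) ^ 2)) ^ (α / (2 * α - 1))))
          atTop (nhds (b, β))} = 1) := by
  refine ⟨fun ε hε Θ hΘ hΘ0 δ hδ => ?_, fun b β hβ p _ T _ _ hT _ => ?_⟩
  · exact part_i hE hα.1 hα.2 hσ P X hXjm hX ε hε Θ hΘ hΘ0 δ hδ
  · have hC := Calpha_pos hα.1 hα.2 (hE (-1) (by norm_num))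
    obtain ⟨e, hc⟩ := phi_psi hα.1 hC hσ (z := (b, β)) hβ
    have h := part_ii hE hα.1 hα.2 P (X b β) (hXjm b β) hβ (hX b β hβ)
    refine (measure_congr (eventuallyEq_univ.2 ?_)).trans measure_univ
    filter_upwards [h] with ω hω
    have := hc.tendsto.comp (hω.comp hT)
    rw [e] at this
    exact this

end
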